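/- arXiv:2211.03953 — 2 statements merged into one kernel-verified Lean document; each statement's English description precedes it below -/
import Mathlib

section
/- For a (3+1)-free finite poset P and skew shape λ/μ, the P-analog skew Schur function, defined as the determinant det[e^P_{λ'_i − μ'_j − i + j}(u)] for 1 ≤ i,j ≤ λ_1, equals the sum of u^T over all P-tableaux T of shape λ/μ (fillings of λ/μ by elements of P strictly increasing in P down columns and with T(i,j) not >_P T(i,j+1) across rows). -/
open MvPolynomial
open scoped Classical

noncomputable section

/-- A poset is `(3+1)`-free: no induced subposet consisting of a 3-chain
together with an element incomparable to all of it. -/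
def ThreePlusOneFree (P : Type*) [PartialOrder P] : Prop :=
  ¬ ∃ a b c x : P, a < b ∧ b < c ∧
    ¬(x ≤ a ∨ a ≤ x) ∧ ¬(x ≤ b ∨ b ≤ x) ∧ ¬(x ≤ c ∨ c ≤ x)

/-- The `P`-elementary function `e_k^P(u)`, the sum of `u_{i_1} ⋯ u_{i_k}`
over strict chains `i_1 <_P ⋯ <_P i_k`. -/
def eP (P : Type*) [Fintype P] [PartialOrder P] (k : ℕ) : MvPolynomial P ℤ :=
  ∑ f ∈ Finset.univ.filter (fun f : Fin k → P => ∀ a b : Fin k, a < b → f a < f b),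
    ∏ i, X (f i)

/-- `e_k^P` for an integer index, vanishing for negative `k`. -/
def ePz (P : Type*) [Fintype P] [PartialOrder P] (k : ℤ) : MvPolynomial P ℤ :=
  if 0 ≤ k then eP P k.toNat else 0

/-- Conjugate partition: `conj f c` is the length of column `c` (0-indexed)
of the diagram of `f`. -/
def conj (f : ℕ → ℕ) (c : ℕ) : ℕ := Set.ncard {i | c < f i}

/-- `f : ℕ → ℕ` (0-indexed list of parts) is a partition. -/
def IsPartition (f : ℕ → ℕ) : Prop := (∀ i, f (i + 1) ≤ f i) ∧ ∃ N, ∀ i, N ≤ i → f i = 0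

/-- `λ/μ/d` is a cylindric shape. -/
def IsCylShape (lam mu : ℕ → ℕ) (d : ℕ) : Prop :=
  IsPartition lam ∧ IsPartition mu ∧ (∀ i, mu i ≤ lam i) ∧ 0 < lam 0 ∧
    conj lam 0 ≤ conj lam (lam 0 - 1) + d ∧
    conj mu 0 ≤ conj mu (lam 0 - 1) + d ∧ d ≤ conj lam 0

section Arrays
variable {P : Type*} [PartialOrder P]

/-- Column-strictness of the array `A` (a total function; only values on the cells
of the shape `col(α,β)`, over `l` columns, matter): entries strictly increase
down each column. This is the defining condition for a `P`-array. -/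
def ColStrict (A : ℕ → ℕ → P) (l : ℕ) (α β : ℕ → ℕ) : Prop :=
  ∀ c r r', c < l → β c ≤ r → r < r' → r' < α c → A r c < A r' c

/-- `col(α,β)` (with `β` a partition) is a skew partition shape. -/
def IsSkewShape (l : ℕ) (α β : ℕ → ℕ) : Prop :=
  (∀ c, c + 1 < l → α (c + 1) ≤ α c ∧ β (c + 1) ≤ β c) ∧ ∀ c, c < l → β c ≤ α c

/-- Rows of `A` are weakly increasing in `P`: no entry is `>_P` its right neighbour. -/
def RowWeak (A : ℕ → ℕ → P) (l : ℕ) (α β : ℕ → ℕ) : Prop :=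
  ∀ r c, c + 1 < l → β c ≤ r → r < α c → β (c + 1) ≤ r → r < α (c + 1) →
    ¬ A r (c + 1) < A r c

/-- `A` is a `P`-tableau of shape `col(α,β)`. -/
def IsPTableau (A : ℕ → ℕ → P) (l : ℕ) (α β : ℕ → ℕ) : Prop :=
  IsSkewShape l α β ∧ ColStrict A l α β ∧ RowWeak A l α β

/-- The glued array `A^d`: columns `0,…,l-1` of `A` shifted down by `d`, and a copy
of column `0` of `A` as the extra column `l`. -/
def glueArr (A : ℕ → ℕ → P) (l d : ℕ) : ℕ → ℕ → P :=
  fun r c => if c < l then A (r - d) c else A r 0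

/-- Column lengths of the glued shape. -/
def glueCol (f : ℕ → ℕ) (l d : ℕ) : ℕ → ℕ :=
  fun c => if c < l then f c + d else f 0

/-- `(r,j)` is an intersection point of columns `i < j` of `A`
(shape `col(α,β)`), with witness in column `i`. -/
def IsIntPoint (A : ℕ → ℕ → P) (α β : ℕ → ℕ) (i j r : ℕ) : Prop :=
  i < j ∧ β j ≤ r ∧ r < α j ∧
    ∃ w, w + j = r + 1 + i ∧ β i ≤ w ∧ (α i ≤ w ∨ A r j < A w i)

/-- Columns `i < j` of `A` intersect. -/
def Intersecting (A : ℕ → ℕ → P) (α β : ℕ → ℕ) (i j : ℕ) : Prop :=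
  ∃ r, IsIntPoint A α β i j r

/-- `(r,j)` is a `P`-minimal intersection point of the array `A` with columns `0,…,L`. -/
def PMinIP (A : ℕ → ℕ → P) (α β : ℕ → ℕ) (L j r : ℕ) : Prop :=
  j ≤ L ∧ (∃ i, IsIntPoint A α β i j r) ∧
    ∀ j' r' i', j' ≤ L → IsIntPoint A α β i' j' r' → ¬ A r' j' < A r j

/-- `(r,j)` is the rightmost `P`-minimal intersection point. -/
def RightmostPMinIP (A : ℕ → ℕ → P) (α β : ℕ → ℕ) (L j r : ℕ) : Prop :=
  PMinIP A α β L j r ∧ ∀ j' r', PMinIP A α β L j' r' → j' ≤ j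

/-- The cylindric swap `swap(A,i,j,d)` at the `P`-minimal intersection point `m` of
columns `i < j ≤ l` of `A^d` (the minimal intersection point is the lowest-row one,
since column `j` is a chain).  Everything is in the coordinates of `A`; the case
`j = l` is the wrap-around case, where entries move between column `i` and column `0`. -/
def swapArr (A : ℕ → ℕ → P) (l d i j : ℕ) (α β : ℕ → ℕ) : ℕ → ℕ → P :=
  let m := sInf {r | IsIntPoint (glueArr A l d) (glueCol α l d) (glueCol β l d) i j r}
  if j < l then
    fun r c =>
      if c = i ∧ m + 1 + i ≤ r + j + d then A (r + (j - i)) j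
      else if c = j ∧ m + 1 ≤ r + d then A (r - (j - i)) i
      else A r c
  else
    fun r c =>
      if c = i ∧ m + 1 + i ≤ r + j + d then A (r + (j - i) + d) 0
      else if c = 0 ∧ m + 1 ≤ r then A (r - (d + (j - i))) i
      else A r c

end Arrays

/-- A cylindric `P`-tableau of shape `λ/μ/d`, encoded column by column:
`T c p` is the entry of column `c` in the `p`-th cell from the top
(global row `conj μ c + p`).  The condition is that the glued filling `T^d`
is a `P`-tableau: the glued shape is a skew shape, columns strictly increase
in `P`, and rows (including the wrap-around adjacency between the last column
and the copy of column `0` shifted up by `d`) weakly increase in `P`. -/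
def IsCylTab {P : Type*} [PartialOrder P] (lam mu : ℕ → ℕ) (d : ℕ)
    (T : ∀ c : Fin (lam 0), Fin (conj lam c - conj mu c) → P) : Prop :=
  (∀ c, c + 1 < lam 0 → conj lam (c + 1) ≤ conj lam c ∧ conj mu (c + 1) ≤ conj mu c) ∧
  (∀ c, c < lam 0 → conj mu c ≤ conj lam c) ∧
  (0 < lam 0 → conj lam 0 ≤ conj lam (lam 0 - 1) + d ∧ conj mu 0 ≤ conj mu (lam 0 - 1) + d) ∧
  (∀ c p q, p < q → T c p < T c q) ∧
  (∀ (c : Fin (lam 0)) (hc : c.1 + 1 < lam 0)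
      (p : Fin (conj lam c.1 - conj mu c.1)) (q : Fin (conj lam (c.1 + 1) - conj mu (c.1 + 1))),
      conj mu c.1 + p.1 = conj mu (c.1 + 1) + q.1 → ¬ T ⟨c.1 + 1, hc⟩ q < T c p) ∧
  (∀ (h0 : 0 < lam 0) (p : Fin (conj lam (lam 0 - 1) - conj mu (lam 0 - 1)))
      (q : Fin (conj lam 0 - conj mu 0)),
      conj mu (lam 0 - 1) + p.1 + d = conj mu 0 + q.1 →
      ¬ T ⟨0, h0⟩ q < T ⟨lam 0 - 1, Nat.sub_lt h0 Nat.one_pos⟩ p)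

/-- The `u`-monomial weight `u^T` of a tableau. -/
def uT {P : Type*} (lam mu : ℕ → ℕ)
    (T : ∀ c : Fin (lam 0), Fin (conj lam c - conj mu c) → P) : MvPolynomial P ℤ :=
  ∏ c, ∏ p, X (T c p)

/-- Number of occurrences of the value `x` in the tableau `T`. -/
def tabCount {P : Type*} (lam mu : ℕ → ℕ)
    (T : ∀ c : Fin (lam 0), Fin (conj lam c - conj mu c) → P) (x : P) : ℕ :=
  ∑ c, (Finset.univ.filter (fun p => T c p = x)).card

/-- `T` is standard: it contains each element of `P` exactly once. -/
def IsStandardTab {P : Type*} (lam mu : ℕ → ℕ)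
    (T : ∀ c : Fin (lam 0), Fin (conj lam c - conj mu c) → P) : Prop :=
  ∀ x : P, tabCount lam mu T x = 1

/-- The chromatic symmetric polynomial of the incomparability graph `inc(P)`,
in the variables `x_0, …, x_{N-1}`. -/
def chromPoly (P : Type*) [Fintype P] [PartialOrder P] (N : ℕ) : MvPolynomial (Fin N) ℤ :=
  ∑ κ ∈ Finset.univ.filter
      (fun κ : P → Fin N => ∀ a b : P, a ≠ b → ¬(a ≤ b ∨ b ≤ a) → κ a ≠ κ b),
    ∏ v, X (κ v)

end

/-!
The determinant expands as a signed sum of pairs of a permutation `σ` and a family of chains in `P`,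
the chain in column `c` running from height `B c` to height `A (σ c)`. Adjoining `⊥` above and `⊤`
below each column makes the row condition of a `P`-tableau a condition on adjacent columns at all
heights, including those where a column has not begun or has already ended; once violations of it
are excluded, `σ` must be the identity. In an array with a violation, take the topmost one, leftmost
in its row, and exchange the parts below it of the two columns involved. `(3+1)`-freeness guarantees
that the new columns are again chains, and the exchange does not disturb the first violation, so it
is a sign-reversing involution and only the `P`-tableaux survive.
-/

section ThreePlusOneFree

variable {Q : Type*} [PartialOrder Q]

lemma ThreePlusOneFree.lt_or_lt (h : ThreePlusOneFree Q) {a b c : Q} (hab : a < b) (hbc : b < c)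
    (x : Q) : a < x ∨ x < c := by
  by_contra! hx
  obtain ⟨hax, hxc⟩ := hx
  refine h ⟨a, b, c, x, hab, hbc, ?_, ?_, ?_⟩
  · rintro (hle | hle)
    · exact hxc (hle.trans_lt (hab.trans hbc))
    · exact hax (hle.lt_of_ne fun heq => hxc (heq ▸ hab.trans hbc))
  · rintro (hle | hle)
    · exact hxc (hle.trans_lt hbc)
    · exact hax (hab.trans_le hle)
  · rintro (hle | hle)
    · exact hxc (hle.lt_of_ne fun heq => hax (heq ▸ hab.trans hbc))
    · exact hax ((hab.trans hbc).trans_le hle)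

lemma ThreePlusOneFree.withBotTop (h : ThreePlusOneFree Q) : ThreePlusOneFree (WithBotTop Q) := by
  rintro ⟨a, b, c, x, hab, hbc, hxa, hxb, hxc⟩
  cases x using WithBotTop.rec with
  | bot => exact hxa (Or.inl bot_le)
  | top => exact hxa (Or.inr le_top)
  | coe x =>
    cases a using WithBotTop.rec with
    | bot => exact hxa (Or.inr bot_le)
    | top => exact hxa (Or.inl le_top)
    | coe a =>
      cases b using WithBotTop.rec with
      | bot => exact hxb (Or.inr bot_le)
      | top => exact hxb (Or.inl le_top)
      | coe b =>
        cases c using WithBotTop.rec with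
        | bot => exact hxc (Or.inr bot_le)
        | top => exact hxc (Or.inl le_top)
        | coe c =>
          simp only [WithBotTop.coe_lt_coe, WithBotTop.coe_le_coe] at *
          exact h ⟨a, b, c, x, hab, hbc, hxa, hxb, hxc⟩

end ThreePlusOneFree

section Columns

variable {Q : Type*} [PartialOrder Q] [BoundedOrder Q] {a a' b b' s : ℕ} {f g : ℕ → Q}

/-- A column occupying the heights `b ≤ t < a` and filled by a chain, read downwards. It is encoded
as a function of all heights, equal to `⊥` above the column and to `⊤` below it. -/
structure IsColumn (b a : ℕ) (f : ℕ → Q) : Prop where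
  eq_bot_iff : ∀ t, f t = ⊥ ↔ t < b
  eq_top_iff : ∀ t, f t = ⊤ ↔ a ≤ t
  lt_succ : ∀ t, f t ≠ ⊤ → f (t + 1) ≠ ⊥ → f t < f (t + 1)

namespace IsColumn

lemma monotone (hf : IsColumn b a f) : Monotone f := by
  refine monotone_nat_of_le_succ fun t => ?_
  by_cases htop : f t = ⊤
  · rw [(hf.eq_top_iff (t + 1)).2 (((hf.eq_top_iff t).1 htop).trans t.le_succ)]
    exact le_top
  by_cases hbot : f (t + 1) = ⊥
  · rw [(hf.eq_bot_iff t).2 (t.lt_succ_self.trans ((hf.eq_bot_iff _).1 hbot))]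
    exact bot_le
  · exact (hf.lt_succ t htop hbot).le

lemma le [Nontrivial Q] (hf : IsColumn b a f) : b ≤ a := by
  by_contra! hab
  exact bot_ne_top (((hf.eq_bot_iff a).2 hab).symm.trans ((hf.eq_top_iff a).2 le_rfl))

/-- The hypotheses on `b` and `a'` say that `f` has begun and `g` has not ended at the cut. -/
lemma splice (hf : IsColumn b a f) (hg : IsColumn b' a' g) (hb : b ≤ s + 1) (ha' : s < a')
    (hlt : f s < g (s + 1)) : IsColumn b a' fun t => if t ≤ s then f t else g t where
  eq_bot_iff t := by
    split_ifs with ht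
    · exact hf.eq_bot_iff t
    · have hgt : g t ≠ ⊥ := (hlt.trans_le (hg.monotone (by lia))).ne_bot
      simp only [hgt, false_iff]
      lia
  eq_top_iff t := by
    split_ifs with ht
    · have hft : f t ≠ ⊤ := ((hf.monotone ht).trans_lt hlt).ne_top
      simp only [hft, false_iff]
      lia
    · exact hg.eq_top_iff t
  lt_succ t htop hbot := by
    obtain ht | rfl | ht := lt_trichotomy t s
    · simp only [ht.le, Nat.succ_le_of_lt ht, if_true] at htop hbot ⊢
      exact hf.lt_succ t htop hbot
    · simpa using hlt
    · simp only [ht.not_ge, (ht.trans t.lt_succ_self).not_ge, if_false] at htop hbot ⊢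
      exact hg.lt_succ t htop hbot

end IsColumn

lemma finite_setOf_isColumn [Finite Q] (b a : ℕ) : {f : ℕ → Q | IsColumn b a f}.Finite := by
  refine Set.Finite.of_finite_image (f := fun f (i : Fin a) => f i) (Set.toFinite _) ?_
  intro f hf g hg hfg
  funext t
  obtain ht | ht := lt_or_ge t a
  · exact congrFun hfg ⟨t, ht⟩
  · rw [(hf.eq_top_iff t).2 ht, (hg.eq_top_iff t).2 ht]

/-- The finite set of all columns occupying the heights `b ≤ t < a`. -/
noncomputable def columns (Q : Type*) [PartialOrder Q] [BoundedOrder Q] [Finite Q] (b a : ℕ) :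
    Finset (ℕ → Q) :=
  (finite_setOf_isColumn b a).toFinset

lemma mem_columns [Finite Q] : f ∈ columns Q b a ↔ IsColumn b a f := by
  simp [columns]

end Columns

lemma perm_eq_one_of_strictMono {ι : Type*} [LinearOrder ι] [WellFoundedLT ι] {σ : Equiv.Perm ι}
    (hσ : StrictMono σ) : σ = 1 :=
  DFunLike.coe_injective <| (hσ.range_inj strictMono_id).1 <| by simp [σ.surjective.range_eq]

section Crossings

variable {ι Q : Type*} [LinearOrder ι] {A B : ι → ℕ} {F : ι → ℕ → Q} {s : ℕ} {c d : ι}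

/-- The columns `c` and `d` of `F` are adjacent, and the entry of `d` at height `s` lies below the
entry of `c` at height `s + 1`. With adjacent columns staggered by one, these are the entries of one
row, so a filling with `IsColumn` columns is a `P`-tableau when it has no crossing. -/
def Crosses [Preorder Q] (F : ι → ℕ → Q) (s : ℕ) (c d : ι) : Prop :=
  c ⋖ d ∧ F d s < F c (s + 1)

/-- The crossing that is topmost and, at that height, leftmost. -/
structure IsFirstCrossing [Preorder Q] (F : ι → ℕ → Q) (s : ℕ) (c d : ι) : Prop where
  crosses : Crosses F s c d
  le : ∀ s' c' d', Crosses F s' c' d' → toLex (s, c) ≤ toLex (s', c')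

/-- Exchange of the columns `c` and `d` of `F` below the height `s`. -/
def swapTails (F : ι → ℕ → Q) (s : ℕ) (c d : ι) : ι → ℕ → Q :=
  fun e t => if t ≤ s then F e t else F (Equiv.swap c d e) t

lemma swapTails_of_le {t : ℕ} (ht : t ≤ s) (e : ι) : swapTails F s c d e t = F e t :=
  if_pos ht

lemma swapTails_of_lt {t : ℕ} (ht : s < t) (e : ι) :
    swapTails F s c d e t = F (Equiv.swap c d e) t :=
  if_neg ht.not_ge

lemma swapTails_swapTails (F : ι → ℕ → Q) (s : ℕ) (c d : ι) :
    swapTails (swapTails F s c d) s c d = F := by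
  funext e t
  obtain ht | ht := le_or_gt t s
  · simp only [swapTails_of_le ht]
  · simp only [swapTails_of_lt ht, Equiv.swap_apply_self]

lemma prod_swapTails {R : Type*} [CommMonoid R] [Fintype ι] (w : Q → R) (N : ℕ) (F : ι → ℕ → Q)
    (s : ℕ) (c d : ι) :
    ∏ e, ∏ t ∈ Finset.range N, w (swapTails F s c d e t) =
      ∏ e, ∏ t ∈ Finset.range N, w (F e t) := by
  rw [Finset.prod_comm, Finset.prod_comm (s := Finset.univ)]
  refine Finset.prod_congr rfl fun t _ => ?_
  obtain ht | ht := le_or_gt t s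
  · simp only [swapTails_of_le ht]
  · simp only [swapTails_of_lt ht]
    exact Equiv.prod_comp (Equiv.swap c d) fun e => w (F e t)

lemma exists_isFirstCrossing [WellFoundedLT ι] [Preorder Q] (h : Crosses F s c d) :
    ∃ s' c' d', IsFirstCrossing F s' c' d' := by
  obtain ⟨p, ⟨d', hp⟩, hmin⟩ := wellFounded_lt.has_min
    {p : ℕ ×ₗ ι | ∃ d, Crosses F (ofLex p).1 (ofLex p).2 d} ⟨toLex (s, c), d, h⟩
  exact ⟨_, _, d', hp, fun s' c' d' h' => not_lt.1 (hmin (toLex (s', c')) ⟨d', h'⟩)⟩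

namespace IsFirstCrossing

lemma unique [Preorder Q] {s' : ℕ} {c' d' : ι} (h : IsFirstCrossing F s c d)
    (h' : IsFirstCrossing F s' c' d') : s = s' ∧ c = c' ∧ d = d' := by
  have hsc : toLex (s, c) = toLex (s', c') :=
    (h.le _ _ _ h'.crosses).antisymm (h'.le _ _ _ h.crosses)
  obtain ⟨rfl, rfl⟩ := Prod.mk.inj (toLex_inj.1 hsc)
  exact ⟨rfl, rfl, h.crosses.1.unique_right h'.crosses.1⟩

variable [PartialOrder Q] [BoundedOrder Q]

/-- The entry `F d (s - 1)` of `d`, which is not below `F c s` as `s` is minimal, together with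
`F d s` and `F d (s + 1)` forms the 3-chain to which freeness applies. -/
lemma lt_of_threePlusOneFree (h31 : ThreePlusOneFree Q) (hB : StrictAnti B)
    (hF : ∀ e, IsColumn (B e) (A e) (F e)) (h : IsFirstCrossing F s c d) :
    F c s < F d (s + 1) := by
  obtain ⟨hcd, hlt⟩ := h.crosses
  have hBcd : B d < B c := hB hcd.lt
  have hBc : B c ≤ s + 1 := not_lt.1 (mt ((hF c).eq_bot_iff _).2 hlt.ne_bot)
  have hd_bot : F d (s + 1) ≠ ⊥ := mt ((hF d).eq_bot_iff _).1 (by lia)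
  obtain hs | hs := lt_or_ge s (B c)
  · rw [((hF c).eq_bot_iff s).2 hs]
    exact hd_bot.bot_lt
  obtain ⟨r, rfl⟩ : ∃ r, s = r + 1 := ⟨s - 1, by lia⟩
  have hd_top : F d (r + 1) ≠ ⊤ := hlt.ne_top
  have hrow : ¬ F d r < F c (r + 1) := fun hr => by
    have := h.le r c d ⟨hcd, hr⟩
    simp [Prod.Lex.toLex_le_toLex] at this
  have hchain₁ : F d r < F d (r + 1) := (hF d).lt_succ r
    (((hF d).monotone r.le_succ).trans_lt hd_top.lt_top).ne
    (mt ((hF d).eq_bot_iff _).1 (by lia))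
  have hchain₂ : F d (r + 1) < F d (r + 2) := (hF d).lt_succ _ hd_top hd_bot
  exact (h31.lt_or_lt hchain₁ hchain₂ (F c (r + 1))).resolve_left hrow

lemma isColumn_swapTails (h31 : ThreePlusOneFree Q) (hB : StrictAnti B)
    (hF : ∀ e, IsColumn (B e) (A e) (F e)) (h : IsFirstCrossing F s c d) (e : ι) :
    IsColumn (B e) (A (Equiv.swap c d e)) (swapTails F s c d e) := by
  obtain ⟨hcd, hlt⟩ := h.crosses
  have hlt' : F c s < F d (s + 1) := h.lt_of_threePlusOneFree h31 hB hF
  have hBcd : B d < B c := hB hcd.lt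
  have hBc : B c ≤ s + 1 := not_lt.1 (mt ((hF c).eq_bot_iff _).2 hlt.ne_bot)
  have hAc : s < A c := not_le.1 (mt ((hF c).eq_top_iff _).2 hlt'.ne_top)
  have hAd : s < A d := not_le.1 (mt ((hF d).eq_top_iff _).2 hlt.ne_top)
  unfold swapTails
  obtain rfl | hec := eq_or_ne e c
  · simpa only [Equiv.swap_apply_left] using (hF e).splice (hF d) hBc hAd hlt'
  obtain rfl | hed := eq_or_ne e d
  · simpa only [Equiv.swap_apply_right] using
      (hF e).splice (hF c) (hBcd.le.trans hBc) hAc hlt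
  · simpa only [Equiv.swap_apply_of_ne_of_ne hec hed, ite_self] using hF e

protected lemma swapTails (hB : StrictAnti B) (hF : ∀ e, IsColumn (B e) (A e) (F e))
    (h : IsFirstCrossing F s c d) : IsFirstCrossing (swapTails F s c d) s c d := by
  obtain ⟨hcd, hlt⟩ := h.crosses
  have hBcd : B d < B c := hB hcd.lt
  have hBc : B c ≤ s + 1 := not_lt.1 (mt ((hF c).eq_bot_iff _).2 hlt.ne_bot)
  refine ⟨⟨hcd, ?_⟩, fun s' c' d' ⟨hcd', hlt'⟩ => ?_⟩
  · rw [swapTails_of_le le_rfl, swapTails_of_lt s.lt_succ_self, Equiv.swap_apply_left]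
    exact (hF d).lt_succ s hlt.ne_top (mt ((hF d).eq_bot_iff _).1 (by lia))
  · by_contra hle
    refine hle (h.le s' c' d' ⟨hcd', ?_⟩)
    obtain hs | ⟨rfl, hc⟩ : s' < s ∨ s' = s ∧ c' < c := by
      simpa [Prod.Lex.toLex_lt_toLex] using hle
    · rwa [swapTails_of_le hs.le, swapTails_of_le (Nat.succ_le_of_lt hs)] at hlt'
    · rwa [swapTails_of_le le_rfl, swapTails_of_lt s'.lt_succ_self,
        Equiv.swap_apply_of_ne_of_ne hc.ne (hc.trans hcd.lt).ne] at hlt'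

end IsFirstCrossing

lemma perm_eq_one_of_not_crosses [PartialOrder Q] [BoundedOrder Q] [Nontrivial Q]
    [WellFoundedLT ι] [LocallyFiniteOrder ι] (hA : StrictAnti A) (hB : StrictAnti B)
    {σ : Equiv.Perm ι} (hF : ∀ e, IsColumn (B e) (A (σ e)) (F e))
    (hcross : ∀ s c d, ¬ Crosses F s c d) : σ = 1 := by
  have hAσ : StrictAnti (A ∘ σ) := (strictAnti_iff_forall_covBy _).2 fun c d hcd => by
    have hBcd : B d < B c := hB hcd.lt
    obtain ⟨r, hr⟩ : ∃ r, A (σ c) = r + 1 :=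
      ⟨A (σ c) - 1, by have := (hF c).le; lia⟩
    have hc : F c (r + 1) = ⊤ := ((hF c).eq_top_iff _).2 hr.le
    have hd : F d r = ⊤ := by
      simpa [Crosses, hcd, hc, lt_top_iff_ne_top] using hcross r c d
    have hAd : A (σ d) ≤ r := ((hF d).eq_top_iff _).1 hd
    simp only [Function.comp_apply]
    lia
  exact perm_eq_one_of_strictMono fun c d hcd => hA.lt_iff_gt.1 (hAσ hcd)

end Crossings

section Arrays

variable {ι Q R : Type*} [LinearOrder ι] [PartialOrder Q] {A B : ι → ℕ} {s : ℕ} {c d : ι}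

/-- The sign-reversing involution on arrays with a crossing: exchange the tails of the two columns
at the first crossing. -/
noncomputable def swapFirst (x : Σ _ : Equiv.Perm ι, ι → ℕ → Q) : Σ _ : Equiv.Perm ι, ι → ℕ → Q :=
  if h : ∃ p : ℕ × ι × ι, IsFirstCrossing x.2 p.1 p.2.1 p.2.2 then
    ⟨x.1 * Equiv.swap h.choose.2.1 h.choose.2.2,
      swapTails x.2 h.choose.1 h.choose.2.1 h.choose.2.2⟩
  else x

lemma swapFirst_eq {x : Σ _ : Equiv.Perm ι, ι → ℕ → Q}
    (h : IsFirstCrossing x.2 s c d) :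
    swapFirst x = ⟨x.1 * Equiv.swap c d, swapTails x.2 s c d⟩ := by
  have hex : ∃ p : ℕ × ι × ι, IsFirstCrossing x.2 p.1 p.2.1 p.2.2 := ⟨(s, c, d), h⟩
  obtain ⟨hs, hc, hd⟩ := hex.choose_spec.unique h
  rw [swapFirst, dif_pos hex, hs, hc, hd]

lemma swapFirst_ne {x : Σ _ : Equiv.Perm ι, ι → ℕ → Q} (h : IsFirstCrossing x.2 s c d) :
    swapFirst x ≠ x := fun heq => by
  rw [swapFirst_eq h] at heq
  exact h.crosses.1.ne (Equiv.swap_eq_one_iff.1 (mul_eq_left.1 (congrArg Sigma.fst heq)))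

variable [Fintype ι] [CommRing R]

/-- The signed weight of an array; `N` should bound the heights of the columns. -/
def signedWeight (w : Q → R) (N : ℕ) (x : Σ _ : Equiv.Perm ι, ι → ℕ → Q) : R :=
  (Equiv.Perm.sign x.1 : ℤ) * ∏ e, ∏ t ∈ Finset.range N, w (x.2 e t)

lemma signedWeight_swapFirst (w : Q → R) (N : ℕ) {x : Σ _ : Equiv.Perm ι, ι → ℕ → Q}
    (h : IsFirstCrossing x.2 s c d) : signedWeight w N (swapFirst x) = -signedWeight w N x := by
  simp [swapFirst_eq h, signedWeight, prod_swapTails, Equiv.Perm.sign_swap h.crosses.1.ne]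

variable [BoundedOrder Q] [Finite Q]

/-- The pairs of a permutation `σ` and a family of columns, the `e`-th of which begins at `B e` and
ends at `A (σ e)`: the terms in the expansion of the determinant. -/
noncomputable def arrays (Q : Type*) [PartialOrder Q] [BoundedOrder Q] [Finite Q] (A B : ι → ℕ) :
    Finset (Σ _ : Equiv.Perm ι, ι → ℕ → Q) :=
  Finset.univ.sigma fun σ => Fintype.piFinset fun e => columns Q (B e) (A (σ e))

lemma mem_arrays {x : Σ _ : Equiv.Perm ι, ι → ℕ → Q} :
    x ∈ arrays Q A B ↔ ∀ e, IsColumn (B e) (A (x.1 e)) (x.2 e) := by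
  simp [arrays, mem_columns]

lemma sum_signedWeight_crossing (h31 : ThreePlusOneFree Q) (hB : StrictAnti B) (w : Q → R)
    (N : ℕ) :
    ∑ x ∈ arrays Q A B with ∃ s c d, Crosses x.2 s c d, signedWeight w N x = 0 := by
  have hfirst : ∀ x ∈ {x ∈ arrays Q A B | ∃ s c d, Crosses x.2 s c d},
      (∀ e, IsColumn (B e) ((A ∘ x.1) e) (x.2 e)) ∧ ∃ s c d, IsFirstCrossing x.2 s c d :=
    fun x hx => by
      obtain ⟨hx, _, _, _, hcross⟩ := Finset.mem_filter.1 hx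
      exact ⟨mem_arrays.1 hx, exists_isFirstCrossing hcross⟩
  refine Finset.sum_involution (fun x _ => swapFirst x) (fun x hx => ?_) (fun x hx _ => ?_)
    (fun x hx => ?_) (fun x hx => ?_) <;> obtain ⟨hcol, s, c, d, h⟩ := hfirst x hx
  · rw [signedWeight_swapFirst w N h, add_neg_cancel]
  · exact swapFirst_ne h
  · rw [swapFirst_eq h]
    exact Finset.mem_filter.2 ⟨mem_arrays.2 (h.isColumn_swapTails h31 hB hcol),
      s, c, d, (h.swapTails hB hcol).crosses⟩
  · have h' : IsFirstCrossing (swapFirst x).2 s c d := by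
      rw [swapFirst_eq h]
      exact h.swapTails hB hcol
    rw [swapFirst_eq h', swapFirst_eq h, swapTails_swapTails, Equiv.mul_swap_mul_self]

end Arrays

section ColumnOf

variable {P : Type*} {a b b' k k' s N : ℕ} {g : Fin k → P}

/-- The column occupying the heights `b ≤ t < b + k` whose entries, read downwards, are `g`. -/
def columnOf (b : ℕ) (g : Fin k → P) (t : ℕ) : WithBotTop P :=
  if t < b then ⊥ else if h : t - b < k then g ⟨t - b, h⟩ else ⊤

lemma columnOf_eq_bot_iff {t : ℕ} : columnOf b g t = ⊥ ↔ t < b := by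
  unfold columnOf
  split_ifs with h <;> simp [h]

lemma columnOf_eq_top_iff {t : ℕ} : columnOf b g t = ⊤ ↔ b + k ≤ t := by
  unfold columnOf
  split_ifs with h h'
  · simp only [WithBotTop.top_ne_bot.symm, false_iff]
    lia
  · simp only [WithBotTop.coe_ne_top, false_iff]
    lia
  · simp only [true_iff]
    lia

lemma columnOf_add (b : ℕ) (g : Fin k → P) (p : Fin k) : columnOf b g (b + p) = g p := by
  simp [columnOf]

lemma columnOf_injective (b : ℕ) :
    Function.Injective (columnOf b : (Fin k → P) → ℕ → WithBotTop P) := fun g g' h =>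
  funext fun p => WithBotTop.coe_injective <| by rw [← columnOf_add, h, columnOf_add]

lemma exists_eq_add_of_le_of_lt {t : ℕ} (hb : b ≤ t) (hk : t < b + k) : ∃ p : Fin k, t = b + p :=
  ⟨⟨t - b, by lia⟩, by simp only; lia⟩

lemma columnOf_lt_columnOf_succ_iff [PartialOrder P] {g' : Fin k' → P} (hb : b' < b)
    (hk : b' + k' < b + k) :
    columnOf b' g' s < columnOf b g (s + 1) ↔
      ∃ (p : Fin k) (q : Fin k'), b + p = b' + q + 1 ∧ s = b' + q ∧ g' q < g p := by
  constructor
  · intro hlt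
    have hb' : b ≤ s + 1 := not_lt.1 (mt columnOf_eq_bot_iff.2 hlt.ne_bot)
    have hk' : s < b' + k' := not_le.1 (mt columnOf_eq_top_iff.2 hlt.ne_top)
    obtain ⟨q, rfl⟩ := exists_eq_add_of_le_of_lt (by lia) hk'
    obtain ⟨p, hp⟩ := exists_eq_add_of_le_of_lt (k := k) hb' (by lia)
    rw [hp, columnOf_add, columnOf_add, WithBotTop.coe_lt_coe] at hlt
    exact ⟨p, q, hp.symm, rfl, hlt⟩
  · rintro ⟨p, q, hpq, rfl, hlt⟩
    rwa [← hpq, columnOf_add, columnOf_add, WithBotTop.coe_lt_coe]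

lemma isColumn_columnOf [PartialOrder P] (hg : StrictMono g) :
    IsColumn b (b + k) (columnOf b g) where
  eq_bot_iff _ := columnOf_eq_bot_iff
  eq_top_iff _ := columnOf_eq_top_iff
  lt_succ t htop hbot := by
    rw [Ne, columnOf_eq_top_iff, not_le] at htop
    obtain ht | ht := lt_or_ge t b
    · rw [columnOf_eq_bot_iff.2 ht]
      exact bot_lt_iff_ne_bot.2 hbot
    obtain ht' | ht' := lt_or_ge (t + 1) (b + k)
    · obtain ⟨p, rfl⟩ := exists_eq_add_of_le_of_lt ht htop
      obtain ⟨q, hq⟩ := exists_eq_add_of_le_of_lt (by lia) ht'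
      rw [hq, columnOf_add, columnOf_add, WithBotTop.coe_lt_coe]
      exact hg (Fin.lt_def.2 (by lia))
    · rw [columnOf_eq_top_iff.2 ht']
      exact lt_top_iff_ne_top.2 (mt columnOf_eq_top_iff.1 htop.not_ge)

lemma IsColumn.exists_columnOf_eq [PartialOrder P] {f : ℕ → WithBotTop P}
    (hf : IsColumn b (b + k) f) : ∃ g : Fin k → P, StrictMono g ∧ columnOf b g = f := by
  have hcoe : ∀ p : Fin k, ∃ x : P, f (b + p) = x := fun p => by
    have hbot : f (b + p) ≠ ⊥ := mt (hf.eq_bot_iff _).1 (by lia)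
    have htop : f (b + p) ≠ ⊤ := mt (hf.eq_top_iff _).1 (by lia)
    cases hp : f (b + p) using WithBotTop.rec with
    | bot => exact absurd hp hbot
    | top => exact absurd hp htop
    | coe x => exact ⟨x, rfl⟩
  choose g hg using hcoe
  refine ⟨g, ?_, ?_⟩
  · intro p q hpq
    have hlt : f (b + p) < f (b + p + 1) := hf.lt_succ _
      (mt (hf.eq_top_iff _).1 (by lia)) (mt (hf.eq_bot_iff _).1 (by lia))
    have hle : f (b + p + 1) ≤ f (b + q) := hf.monotone (by rw [Fin.lt_def] at hpq; lia)
    simpa only [hg, WithBotTop.coe_lt_coe] using hlt.trans_le hle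
  · funext t
    obtain ht | ht := lt_or_ge t b
    · rw [columnOf_eq_bot_iff.2 ht, (hf.eq_bot_iff t).2 ht]
    obtain ht' | ht' := lt_or_ge t (b + k)
    · obtain ⟨p, rfl⟩ := exists_eq_add_of_le_of_lt ht ht'
      rw [columnOf_add, hg]
    · rw [columnOf_eq_top_iff.2 ht', (hf.eq_top_iff t).2 ht']

/-- The variable `u_p` of an entry `p`; the sentinels `⊥` and `⊤` have weight `1`. -/
noncomputable def entryWeight : WithBotTop P → MvPolynomial P ℤ :=
  WithBotTop.rec 1 X 1

lemma prod_entryWeight_columnOf (hN : b + k ≤ N) (g : Fin k → P) :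
    ∏ t ∈ Finset.range N, entryWeight (columnOf b g t) = ∏ p, X (g p) := by
  have hbot : ∀ t ∈ Finset.range b, entryWeight (columnOf b g t) = 1 := fun t ht => by
    rw [columnOf_eq_bot_iff.2 (Finset.mem_range.1 ht), entryWeight, WithBotTop.rec_bot]
  have htop : ∀ t, entryWeight (columnOf b g (b + k + t)) = 1 := fun t => by
    rw [columnOf_eq_top_iff.2 (Nat.le_add_right _ t), entryWeight, WithBotTop.rec_top]
  obtain ⟨m, rfl⟩ := Nat.exists_eq_add_of_le hN
  rw [Finset.prod_range_add, Finset.prod_range_add, Finset.prod_eq_one hbot, one_mul,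
    Finset.prod_eq_one fun t _ => htop t, mul_one, Finset.prod_range]
  simp only [columnOf_add, entryWeight, WithBotTop.rec_coe]

variable [PartialOrder P] [Fintype P]

lemma sum_columns_add {M : Type*} [AddCommMonoid M] (b k : ℕ) (φ : (ℕ → WithBotTop P) → M) :
    ∑ f ∈ columns (WithBotTop P) b (b + k), φ f =
      ∑ g : Fin k → P with StrictMono g, φ (columnOf b g) := by
  symm
  refine Finset.sum_bij (fun g _ => columnOf b g) (fun g hg => ?_)
    (fun g _ g' _ h => columnOf_injective b h) (fun f hf => ?_) (fun _ _ => rfl)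
  · exact mem_columns.2 (isColumn_columnOf (Finset.mem_filter.1 hg).2)
  · obtain ⟨g, hg, rfl⟩ := (mem_columns.1 hf).exists_columnOf_eq
    exact ⟨g, by simpa using hg, rfl⟩

lemma ePz_sub_eq_sum_columns (hN : a ≤ N) :
    ePz P ((a : ℤ) - b) =
      ∑ f ∈ columns (WithBotTop P) b a, ∏ t ∈ Finset.range N, entryWeight (f t) := by
  obtain hab | hab := lt_or_ge a b
  · have hempty : columns (WithBotTop P) b a = ∅ :=
      Finset.eq_empty_of_forall_notMem fun f hf => hab.not_ge (mem_columns.1 hf).le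
    rw [hempty, Finset.sum_empty, ePz, if_neg (by lia)]
  · obtain ⟨k, rfl⟩ := Nat.exists_eq_add_of_le hab
    have hk : (((b + k : ℕ) : ℤ) - b).toNat = k := by lia
    rw [sum_columns_add, ePz, if_pos (by lia), hk]
    simp only [prod_entryWeight_columnOf hN, eP, StrictMono]

end ColumnOf

section Determinant

variable {ι P : Type*} [LinearOrder ι] [Fintype ι] [PartialOrder P] [Fintype P]

lemma det_ePz_eq_sum_arrays (A B : ι → ℕ) {N : ℕ} (hN : ∀ e, A e ≤ N) :
    (Matrix.of fun i j => ePz P ((A i : ℤ) - B j)).det =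
      ∑ x ∈ arrays (WithBotTop P) A B, signedWeight entryWeight N x := by
  rw [Matrix.det_apply', arrays, Finset.sum_sigma]
  refine Finset.sum_congr rfl fun σ _ => ?_
  simp only [Matrix.of_apply, ePz_sub_eq_sum_columns (hN _), Finset.prod_univ_sum, signedWeight,
    Finset.mul_sum]

/-- The fillings `T` of the columns `B c ≤ t < B c + k c` that are `P`-tableaux. The columns are
staggered, so `B c + p = B d + q + 1` says that `T c p` is the left neighbour of `T d q`. -/
noncomputable def tableaux (P : Type*) [PartialOrder P] [Fintype P] (B k : ι → ℕ) :
    Finset (∀ c, Fin (k c) → P) :=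
  {T | (∀ c, StrictMono (T c)) ∧ ∀ c d, c ⋖ d → ∀ (p : Fin (k c)) (q : Fin (k d)),
    B c + p = B d + q + 1 → ¬ T d q < T c p}

lemma mem_tableaux_iff_not_crosses {B k : ι → ℕ} (hB : StrictAnti B) (hBk : StrictAnti (B + k))
    {T : ∀ c, Fin (k c) → P} : T ∈ tableaux P B k ↔ (∀ c, StrictMono (T c)) ∧
      ¬ ∃ s c d, Crosses (fun e => columnOf (B e) (T e)) s c d := by
  have hcross : ∀ c d, c ⋖ d → ((∃ s, columnOf (B d) (T d) s < columnOf (B c) (T c) (s + 1)) ↔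
      ∃ (p : Fin (k c)) (q : Fin (k d)), B c + p = B d + q + 1 ∧ T d q < T c p) := by
    intro c d hcd
    simp only [columnOf_lt_columnOf_succ_iff (hB hcd.lt) (hBk hcd.lt)]
    grind
  simp only [tableaux, Finset.mem_filter, Finset.mem_univ, true_and, Crosses]
  grind

lemma sum_signedWeight_not_crossing [LocallyFiniteOrder ι] {B k : ι → ℕ} (hB : StrictAnti B)
    (hBk : StrictAnti (B + k)) {N : ℕ} (hN : ∀ e, (B + k) e ≤ N) :
    ∑ x ∈ arrays (WithBotTop P) (B + k) B with ¬ ∃ s c d, Crosses x.2 s c d,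
        signedWeight entryWeight N x = ∑ T ∈ tableaux P B k, ∏ c, ∏ p, X (T c p) := by
  symm
  refine Finset.sum_bij (fun T _ => ⟨1, fun c => columnOf (B c) (T c)⟩) ?_ ?_ ?_ ?_
  · intro T hT
    obtain ⟨hcol, hrow⟩ := (mem_tableaux_iff_not_crosses hB hBk).1 hT
    exact Finset.mem_filter.2 ⟨mem_arrays.2 fun c => isColumn_columnOf (hcol c), hrow⟩
  · intro T _ T' _ h
    simp only [Sigma.mk.injEq, heq_eq_eq, true_and] at h
    exact funext fun c => columnOf_injective _ (congrFun h c)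
  · rintro ⟨σ, F⟩ hF
    obtain ⟨hcol, hrow⟩ := Finset.mem_filter.1 hF
    obtain rfl : σ = 1 := perm_eq_one_of_not_crosses hBk hB (mem_arrays.1 hcol)
      fun s c d h => hrow ⟨s, c, d, h⟩
    replace hcol : ∀ c, IsColumn (B c) (B c + k c) (F c) := mem_arrays.1 hcol
    choose T hT hTF using fun c => (hcol c).exists_columnOf_eq
    obtain rfl : (fun c => columnOf (B c) (T c)) = F := funext hTF
    exact ⟨T, (mem_tableaux_iff_not_crosses hB hBk).2 ⟨hT, hrow⟩, rfl⟩
  · intro T _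
    simp [signedWeight, prod_entryWeight_columnOf (hN _)]

lemma det_ePz_eq_sum_tableaux [LocallyFiniteOrder ι] (h31 : ThreePlusOneFree P) {B k : ι → ℕ}
    (hB : StrictAnti B) (hBk : StrictAnti (B + k)) :
    (Matrix.of fun i j => ePz P (((B + k) i : ℤ) - B j)).det =
      ∑ T ∈ tableaux P B k, ∏ c, ∏ p, X (T c p) := by
  have hN : ∀ e, (B + k) e ≤ ∑ i, (B + k) i := fun e =>
    Finset.single_le_sum (fun i _ => Nat.zero_le _) (Finset.mem_univ e)
  rw [det_ePz_eq_sum_arrays _ _ hN,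
    ← Finset.sum_filter_add_sum_filter_not _ fun x => ∃ s c d, Crosses x.2 s c d,
    sum_signedWeight_crossing h31.withBotTop hB, zero_add, sum_signedWeight_not_crossing hB hBk hN]

end Determinant

section Conjugate

variable {f g : ℕ → ℕ}

lemma IsPartition.finite_support (hf : IsPartition f) : f.support.Finite := by
  obtain ⟨N, hN⟩ := hf.2
  exact (Set.finite_Iio N).subset fun i hi => not_le.1 fun hNi => hi (hN i hNi)

lemma finite_setOf_lt (hf : f.support.Finite) (c : ℕ) : {i | c < f i}.Finite :=
  hf.subset fun _ hi => Nat.ne_zero_of_lt hi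

lemma conj_antitone (hf : f.support.Finite) : Antitone (conj f) := fun c _ hcd =>
  Set.ncard_le_ncard (fun _ hi => hcd.trans_lt hi) (finite_setOf_lt hf c)

lemma conj_le_conj (hg : g.support.Finite) (hfg : ∀ i, f i ≤ g i) (c : ℕ) :
    conj f c ≤ conj g c :=
  Set.ncard_le_ncard (fun i hi => hi.trans_le (hfg i)) (finite_setOf_lt hg c)

/-- The length of column `c` of the diagram of `f`, shifted down by `n - 1 - c` so that neighbouring
cells of a row differ by one in height. -/
noncomputable def staggeredConj (f : ℕ → ℕ) {n : ℕ} (c : Fin n) : ℕ :=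
  conj f c + c.rev

lemma strictAnti_staggeredConj (hf : f.support.Finite) {n : ℕ} :
    StrictAnti (staggeredConj f : Fin n → ℕ) := fun _ _ hcd =>
  add_lt_add_of_le_of_lt (conj_antitone hf hcd.le) (Fin.rev_strictAnti hcd)

lemma staggeredConj_sub_staggeredConj (f g : ℕ → ℕ) {n : ℕ} (i j : Fin n) :
    (staggeredConj f i : ℤ) - staggeredConj g j = (conj f i : ℤ) - conj g j - i + j := by
  simp only [staggeredConj, Fin.val_rev]
  omega

lemma mem_tableaux_staggeredConj {P : Type*} [PartialOrder P] [Fintype P] {n : ℕ} {k : Fin n → ℕ}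
    {T : ∀ c, Fin (k c) → P} : T ∈ tableaux P (staggeredConj f) k ↔
      (∀ c, StrictMono (T c)) ∧
      ∀ (c : Fin n) (hc : c.1 + 1 < n) (p : Fin (k c)) (q : Fin (k ⟨c + 1, hc⟩)),
        conj f c + p = conj f (c + 1) + q → ¬ T ⟨c + 1, hc⟩ q < T c p := by
  simp only [tableaux, Finset.mem_filter, Finset.mem_univ, true_and, staggeredConj, Fin.val_rev,
    Fin.covBy_iff, Order.covBy_iff_add_one_eq]
  refine and_congr_right fun _ => ⟨fun h c hc p q hpq => h c ⟨c + 1, hc⟩ rfl p q ?_, ?_⟩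
  · simp only
    omega
  · rintro h c ⟨_, hd⟩ rfl p q hpq
    exact h c hd p q (by simp only at hpq; omega)

end Conjugate

/-- (reformulation of Gasharov's theorem) for a `(3+1)`-free finite
poset `P` and skew shape `λ/μ`, the determinant `det[e^P_{λ'_i - μ'_j - i + j}(u)]`
(indices `1 ≤ i,j ≤ λ₁`) equals the sum of `u^T` over all `P`-tableaux `T` of shape
`λ/μ` (encoded column by column). -/
theorem stmt_6 (P : Type*) [Fintype P] [PartialOrder P] (h31 : ThreePlusOneFree P)
    (lam mu : ℕ → ℕ) (hlam : IsPartition lam) (hmu : IsPartition mu)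
    (hsub : ∀ i, mu i ≤ lam i) :
    Matrix.det (Matrix.of fun i j : Fin (lam 0) =>
        ePz P ((conj lam i.1 : ℤ) - (conj mu j.1 : ℤ) - (i.1 : ℤ) + (j.1 : ℤ)))
      = ∑ T : {T : ∀ c : Fin (lam 0), Fin (conj lam c - conj mu c) → P //
            (∀ c p q, p < q → T c p < T c q) ∧
            (∀ (c : Fin (lam 0)) (hc : c.1 + 1 < lam 0)
                (p : Fin (conj lam c.1 - conj mu c.1))
                (q : Fin (conj lam (c.1 + 1) - conj mu (c.1 + 1))),
                conj mu c.1 + p.1 = conj mu (c.1 + 1) + q.1 →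
                  ¬ T ⟨c.1 + 1, hc⟩ q < T c p)},
          uT lam mu T.1 := by
  set k : Fin (lam 0) → ℕ := fun c => conj lam c - conj mu c with hk
  have hlam_eq : staggeredConj lam = staggeredConj mu + k := funext fun c => by
    have hle : conj mu c ≤ conj lam c := conj_le_conj hlam.finite_support hsub c
    simp only [Pi.add_apply, staggeredConj, hk]
    lia
  have hanti : StrictAnti (staggeredConj mu + k) :=
    hlam_eq ▸ strictAnti_staggeredConj hlam.finite_support
  simp only [← staggeredConj_sub_staggeredConj, hlam_eq]
  rw [det_ePz_eq_sum_tableaux h31 (strictAnti_staggeredConj hmu.finite_support) hanti]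
  exact Finset.sum_subtype _ (fun _ => mem_tableaux_staggeredConj) _
end

section
/- For a (3+1)-free finite poset P and cylindric shape λ/μ/d, the P-cylindric Schur function s^P_{λ/μ/d}(u) := Σ_{k ∈ Z^{λ_1}, Σk_i = 0} det[e^P_{k_i(λ_1+d) + λ'_i − μ'_j − i + j}(u)] equals Σ_{T ∈ CT_P(λ/μ/d)} u^T, the weight generating function of cylindric P-tableaux of shape λ/μ/d. In particular s^P_{λ/μ/d}(u) is a nonnegative integer combination of monomials in the u variables. -/
open MvPolynomial
open scoped Classical

/-!
Expanding the determinants by the Leibniz formula turns the left-hand side into a signed sum over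
arrays of `P`-chains drawn on a cylinder, indexed by the affine permutations: a vector of winding
numbers of total `0` together with a permutation. Unroll the cylinder to an infinite periodic array.
If two of its columns cross, choose a crossing with minimal entry and exchange the tails of the two
columns, in all turns at once. By `(3+1)`-freeness the new columns are chains again and the minimal
crossings stay the same, so this is an involution; it multiplies the affine permutation by a
reflection, hence it reverses the sign. In an array without crossings the column ends are in order,
which forces the affine permutation to be trivial, and the arrays that remain are exactly the
cylindric `P`-tableaux.
-/

namespace CylindricSchur

noncomputable section

/-- The consequence of `(3+1)`-freeness that drives the whole argument: every element is below the
top or above the bottom of every three-element chain. Unlike `(3+1)`-freeness as usually stated, it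
passes to `WithBot` and `WithTop`. -/
def ChainComparable (Q : Type*) [Preorder Q] : Prop :=
  ∀ ⦃a b c : Q⦄, a < b → b < c → ∀ x, x < c ∨ a < x

theorem chainComparable_of_threePlusOneFree {P : Type*} [PartialOrder P]
    (hP : ThreePlusOneFree P) : ChainComparable P := by
  intro a b c hab hbc x
  by_contra! hx
  have hac := hab.trans hbc
  refine hP ⟨a, b, c, x, hab, hbc, ?_, ?_, ?_⟩ <;> rintro (h | h)
  · exact hx.1 (h.trans_lt hac)
  · exact h.eq_or_lt.elim (fun hax => hx.1 (hax ▸ hac)) hx.2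
  · exact hx.1 (h.trans_lt hbc)
  · exact hx.2 (hab.trans_le h)
  · exact h.eq_or_lt.elim (fun hxc => hx.2 (hxc ▸ hac)) hx.1
  · exact hx.2 (hac.trans_le h)

theorem ChainComparable.withTop {Q : Type*} [Preorder Q] (hQ : ChainComparable Q) :
    ChainComparable (WithTop Q) := by
  intro a b c hab hbc x
  lift b to Q using hbc.ne_top
  lift a to Q using hab.ne_top
  cases x with
  | top => exact .inr (WithTop.coe_lt_top a)
  | coe x =>
    cases c with
    | top => exact .inl (WithTop.coe_lt_top x)
    | coe c =>
      simpa only [WithTop.coe_lt_coe] using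
        hQ (WithTop.coe_lt_coe.mp hab) (WithTop.coe_lt_coe.mp hbc) x

theorem ChainComparable.withBot {Q : Type*} [Preorder Q] (hQ : ChainComparable Q) :
    ChainComparable (WithBot Q) := by
  intro a b c hab hbc x
  lift b to Q using hab.ne_bot
  lift c to Q using hbc.ne_bot
  cases x with
  | bot => exact .inl (WithBot.bot_lt_coe c)
  | coe x =>
    cases a with
    | bot => exact .inr (WithBot.bot_lt_coe x)
    | coe a =>
      simpa only [WithBot.coe_lt_coe] using
        hQ (WithBot.coe_lt_coe.mp hab) (WithBot.coe_lt_coe.mp hbc) x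

section Columns

variable {Q : Type*} [PartialOrder Q] [BoundedOrder Q] {b e b' e' θ : ℤ} {g g' : ℤ → Q}

/-- A strictly increasing column with cells `b, …, e - 1`, padded by `⊥` above its first cell and
by `⊤` below its last one. -/
structure IsColumn (b e : ℤ) (g : ℤ → Q) : Prop where
  le : b ≤ e
  eq_bot_iff : ∀ x, g x = ⊥ ↔ x < b
  eq_top_iff : ∀ x, g x = ⊤ ↔ e ≤ x
  strictMonoOn : StrictMonoOn g (Set.Ico b e)

namespace IsColumn

variable {x y : ℤ}

theorem le_of_ne_bot (h : IsColumn b e g) (hx : g x ≠ ⊥) : b ≤ x :=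
  not_lt.mp fun hlt => hx ((h.eq_bot_iff x).mpr hlt)

theorem lt_of_ne_top (h : IsColumn b e g) (hx : g x ≠ ⊤) : x < e :=
  not_le.mp fun hle => hx ((h.eq_top_iff x).mpr hle)

theorem ne_bot (h : IsColumn b e g) (hx : b ≤ x) : g x ≠ ⊥ :=
  fun hbot => hx.not_gt ((h.eq_bot_iff x).mp hbot)

theorem ne_top (h : IsColumn b e g) (hx : x < e) : g x ≠ ⊤ :=
  fun htop => hx.not_ge ((h.eq_top_iff x).mp htop)

theorem lt (h : IsColumn b e g) (hxy : x < y) (hy : b ≤ y) (hx : x < e) : g x < g y := by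
  rcases lt_or_ge x b with hxb | hbx
  · rw [(h.eq_bot_iff x).mpr hxb]
    exact bot_lt_iff_ne_bot.mpr (h.ne_bot hy)
  rcases lt_or_ge y e with hye | hey
  · exact h.strictMonoOn ⟨hbx, hx⟩ ⟨hy, hye⟩ hxy
  · rw [(h.eq_top_iff y).mpr hey]
    exact lt_top_iff_ne_top.mpr (h.ne_top hx)

theorem monotone (h : IsColumn b e g) : Monotone g := by
  intro x y hxy
  rcases hxy.eq_or_lt with rfl | hxy
  · exact le_rfl
  rcases lt_or_ge y b with hy | hy
  · exact ((h.eq_bot_iff x).mpr (hxy.trans hy)).trans_le bot_le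
  rcases lt_or_ge x e with hx | hx
  · exact (h.lt hxy hy hx).le
  · exact le_top.trans_eq ((h.eq_top_iff y).mpr (hx.trans hxy.le)).symm

theorem shift (h : IsColumn b e g) (s : ℤ) :
    IsColumn (b - s) (e - s) fun x => g (x + s) where
  le := sub_le_sub_right h.le s
  eq_bot_iff _ := (h.eq_bot_iff _).trans lt_sub_iff_add_lt.symm
  eq_top_iff _ := (h.eq_top_iff _).trans sub_le_iff_le_add.symm
  strictMonoOn _ hx _ hy hxy :=
    h.strictMonoOn ⟨sub_le_iff_le_add.mp hx.1, lt_sub_iff_add_lt.mp hx.2⟩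
      ⟨sub_le_iff_le_add.mp hy.1, lt_sub_iff_add_lt.mp hy.2⟩ (add_lt_add_left hxy s)

theorem glue (h : IsColumn b e g) (h' : IsColumn b' e' g') (hlt : g θ < g' (θ + 1))
    (hlt' : g' θ < g (θ + 1)) : IsColumn b e' fun x => if x ≤ θ then g x else g' x := by
  have hb : b ≤ θ + 1 := h.le_of_ne_bot hlt'.ne_bot
  have hb' : b' ≤ θ + 1 := h'.le_of_ne_bot hlt.ne_bot
  have he : θ < e := h.lt_of_ne_top hlt.ne_top
  have he' : θ < e' := h'.lt_of_ne_top hlt'.ne_top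
  refine ⟨by lia, fun x => ?_, fun x => ?_, fun x hx y hy hxy => ?_⟩
  · split_ifs
    · exact h.eq_bot_iff x
    · exact iff_of_false (h'.ne_bot (by lia)) (by lia)
  · split_ifs with hx
    · exact iff_of_false (h.ne_top (by lia)) (by lia)
    · exact h'.eq_top_iff x
  · rcases hx with ⟨hbx, -⟩
    rcases hy with ⟨-, hye⟩
    split_ifs with hx hy hy
    · exact h.lt hxy (by lia) (by lia)
    · exact (h.monotone hx).trans_lt (hlt.trans_le (h'.monotone (by lia)))
    · exact absurd (hxy.le.trans hy) hx
    · exact h'.lt hxy (by lia) (by lia)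

end IsColumn

end Columns

section Crossings

variable {C Q : Type*} [LinearOrder C] [PartialOrder Q] [BoundedOrder Q]
  {b e : C → ℤ} {G : C → ℤ → Q} {i j k : C} {x : ℤ}

/-- Columns `i < j` of the array `G` cross at cell `x` of column `j`. Rows are measured along
diagonals: the left neighbour in column `i` of cell `x` of column `i + 1` is `x + 1`. -/
def Crosses (G : C → ℤ → Q) (i j : C) (x : ℤ) : Prop :=
  i < j ∧ G j x ≠ ⊥ ∧ G j x < G i (x + 1)

/-- Some column crosses column `j` at `x`. -/
def IsCrossing (G : C → ℤ → Q) (j : C) (x : ℤ) : Prop := ∃ i, Crosses G i j x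

/-- Above a crossing the two columns may be exchanged as well: this is where column `i` starting
below column `j` and the chain condition enter. -/
theorem Crosses.lt_of_not_crosses_pred (hQ : ChainComparable Q) (hb : StrictAnti b)
    (hcol : ∀ c, IsColumn (b c) (e c) (G c)) (h : Crosses G i j x)
    (hpred : ¬ Crosses G i j (x - 1)) : G i x < G j (x + 1) := by
  obtain ⟨hij, hbot, hlt⟩ := h
  have hbx : b j ≤ x := (hcol j).le_of_ne_bot hbot
  have hxe : x < e j := (hcol j).lt_of_ne_top hlt.ne_top
  have hnext : G j x < G j (x + 1) := (hcol j).lt (lt_add_one x) (by lia) hxe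
  rcases hbx.eq_or_lt with rfl | hbx
  · rw [((hcol i).eq_bot_iff _).mpr (hb hij)]
    exact hnext.bot_lt
  have hprev : G j (x - 1) < G j x := (hcol j).lt (sub_one_lt x) hbx.le (by lia)
  refine (hQ hprev hnext (G i x)).resolve_right fun hcross => hpred ⟨hij, ?_, ?_⟩
  · exact (hcol j).ne_bot (by lia)
  · rwa [sub_add_cancel]

theorem Crosses.left_or_right (hQ : ChainComparable Q) (hb : StrictAnti b)
    (hcol : ∀ c, IsColumn (b c) (e c) (G c)) (h : Crosses G i k x) (hij : i < j) (hjk : j < k) :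
    Crosses G i j x ∨ Crosses G j k (x - 1) := by
  obtain ⟨-, hbot, hlt⟩ := h
  have hbi := hb hij
  have hbk := hb hjk
  have hkx : b k ≤ x := (hcol k).le_of_ne_bot hbot
  have hix : b i ≤ x + 1 := (hcol i).le_of_ne_bot hlt.ne_bot
  have hprev : G k (x - 1) < G k x :=
    (hcol k).lt (sub_one_lt x) hkx (by linarith [(hcol k).lt_of_ne_top hlt.ne_top])
  rcases hQ hprev hlt (G j x) with h | h
  · exact .inl ⟨hij, (hcol j).ne_bot (by lia), h⟩
  · exact .inr ⟨hjk, (hcol k).ne_bot (by lia), by rwa [sub_add_cancel]⟩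

theorem not_crosses_of_covBy [LocallyFiniteOrder C] (hQ : ChainComparable Q) (hb : StrictAnti b)
    (hcol : ∀ c, IsColumn (b c) (e c) (G c))
    (h : ∀ i j, i ⋖ j → ∀ x, ¬ Crosses G i j x) (i j : C) (x : ℤ) : ¬ Crosses G i j x := by
  suffices ∀ i, Relation.TransGen (· ⋖ ·) i j → i < j ∧ ∀ x, ¬ Crosses G i j x from
    fun hx => (this i (transGen_covBy_of_lt hx.1)).2 x hx
  intro i hij
  induction hij using Relation.TransGen.head_induction_on with
  | single hij => exact ⟨hij.lt, h _ _ hij⟩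
  | head hij _ ih =>
    refine ⟨hij.lt.trans ih.1, fun x hx => ?_⟩
    exact (hx.left_or_right hQ hb hcol hij.lt ih.1).elim (h _ _ hij x) (ih.2 (x - 1))

theorem strictAnti_end_of_not_crosses (hb : StrictAnti b)
    (hcol : ∀ c, IsColumn (b c) (e c) (G c)) (h : ∀ i j x, ¬ Crosses G i j x) :
    StrictAnti e := by
  intro i j hij
  by_contra! he
  have hbj : b j < e j := (hb hij).trans_le ((hcol i).le.trans he)
  refine h i j (e j - 1) ⟨hij, (hcol j).ne_bot (by lia), ?_⟩
  rw [sub_add_cancel, ((hcol i).eq_top_iff _).mpr he]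
  exact lt_top_iff_ne_top.mpr ((hcol j).ne_top (sub_one_lt _))

/-- The crossings whose entry is minimal in `Q` among the entries at all crossings. -/
def minCrossings (G : C → ℤ → Q) : Set (C × ℤ) :=
  {p | IsCrossing G p.1 p.2 ∧ ∀ j x, IsCrossing G j x → ¬ G j x < G p.1 p.2}

theorem minCrossings_nonempty [WellFoundedLT Q] (h : IsCrossing G j x) :
    (minCrossings G).Nonempty := by
  obtain ⟨⟨p, hp⟩, -, hmin⟩ := (InvImage.wf (fun p : {p : C × ℤ // IsCrossing G p.1 p.2} =>
    G p.1.1 p.1.2) (wellFounded_lt (α := Q))).has_min Set.univ ⟨⟨(j, x), h⟩, trivial⟩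
  exact ⟨p, hp, fun j x hjx => hmin ⟨(j, x), hjx⟩ trivial⟩

end Crossings

section Exchange

variable {C Q : Type*} {t : C → C} {θ : C → ℤ} {G : C → ℤ → Q} {c i j : C} {x : ℤ}

/-- Replace the tail of each column `c` below `θ c` by the corresponding tail of column `t c`. -/
def swapTails (t : C → C) (θ : C → ℤ) (G : C → ℤ → Q) (c : C) (x : ℤ) : Q :=
  if x ≤ θ c then G c x else G (t c) x

theorem swapTails_of_le (hx : x ≤ θ c) : swapTails t θ G c x = G c x := if_pos hx

theorem swapTails_of_lt (hx : θ c < x) : swapTails t θ G c x = G (t c) x := if_neg hx.not_ge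

theorem swapTails_of_fixed (hc : t c = c) : swapTails t θ G c x = G c x := by
  rw [swapTails, hc, ite_self]

theorem swapTails_swapTails (ht : Function.Involutive t) (hθ : ∀ c, θ (t c) = θ c) :
    swapTails t θ (swapTails t θ G) = G := by
  funext c x
  rcases le_or_gt x (θ c) with hx | hx
  · rw [swapTails_of_le hx, swapTails_of_le hx]
  · rw [swapTails_of_lt hx, swapTails_of_lt (by rwa [hθ]), ht]

variable [LinearOrder C] [PartialOrder Q] [BoundedOrder Q] {b e : C → ℤ} {v : Q}

/-- `t` pairs up columns of `G` that cross at the cuts `θ`, all at entries equal to `v`, and the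
later column of each pair has no crossing above its cut. -/
structure IsExchange (t : C → C) (θ : C → ℤ) (v : Q) (G : C → ℤ → Q) : Prop where
  invol : Function.Involutive t
  cut_eq : ∀ c, θ (t c) = θ c
  crosses : ∀ i, i < t i → Crosses G i (t i) (θ i)
  value : ∀ i, i < t i → G (t i) (θ i) = v
  first : ∀ i, i < t i → ∀ x < θ i, ¬ IsCrossing G (t i) x

namespace IsExchange

theorem lt_apply (h : IsExchange t θ v G) (hc : t c < c) : t c < t (t c) := by rwa [h.invol]

theorem lt_tail (h : IsExchange t θ v G) (hcol : ∀ c, IsColumn (b c) (e c) (G c))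
    (hc : t c ≠ c) (hx : θ c < x) : v < G c x := by
  rcases hc.lt_or_gt with hlt | hlt
  · have hlt' := h.lt_apply hlt
    obtain ⟨-, hbot, hcross⟩ := h.crosses _ hlt'
    have hv := h.value _ hlt'
    rw [h.invol, h.cut_eq] at hbot hcross hv
    rw [← hv]
    exact (hcol c).lt hx (((hcol c).le_of_ne_bot hbot).trans hx.le)
      ((hcol c).lt_of_ne_top hcross.ne_top)
  · calc v = G (t c) (θ c) := (h.value c hlt).symm
      _ < G c (θ c + 1) := (h.crosses c hlt).2.2
      _ ≤ G c x := (hcol c).monotone hx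

theorem lt_swapTails_iff (h : IsExchange t θ v G) (hcol : ∀ c, IsColumn (b c) (e c) (G c))
    (c : C) (x : ℤ) : v < swapTails t θ G c x ↔ v < G c x := by
  by_cases hc : t c = c
  · rw [swapTails_of_fixed hc]
  rcases le_or_gt x (θ c) with hx | hx
  · rw [swapTails_of_le hx]
  rw [swapTails_of_lt hx]
  exact iff_of_true (h.lt_tail hcol (by rwa [h.invol, ne_comm]) (by rwa [h.cut_eq]))
    (h.lt_tail hcol hc hx)

theorem swapTails_of_not_lt (h : IsExchange t θ v G) (hcol : ∀ c, IsColumn (b c) (e c) (G c))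
    (hv : ¬ v < G c x) : swapTails t θ G c x = G c x := by
  by_cases hc : t c = c
  · exact swapTails_of_fixed hc
  · exact swapTails_of_le (not_lt.mp fun hx => hv (h.lt_tail hcol hc hx))

theorem lt_cross (h : IsExchange t θ v G) (hQ : ChainComparable Q) (hb : StrictAnti b)
    (hcol : ∀ c, IsColumn (b c) (e c) (G c)) (hi : i < t i) :
    G i (θ i) < G (t i) (θ i + 1) :=
  (h.crosses i hi).lt_of_not_crosses_pred hQ hb hcol fun hpred =>
    h.first i hi _ (sub_one_lt _) ⟨i, hpred⟩

theorem isColumn_swapTails (h : IsExchange t θ v G) (hQ : ChainComparable Q) (hb : StrictAnti b)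
    (hcol : ∀ c, IsColumn (b c) (e c) (G c)) (c : C) :
    IsColumn (b c) (e (t c)) (swapTails t θ G c) := by
  rcases lt_trichotomy c (t c) with hc | hc | hc
  · exact (hcol c).glue (hcol (t c)) (h.lt_cross hQ hb hcol hc) (h.crosses c hc).2.2
  · rw [← hc, show swapTails t θ G c = G c from funext fun x => swapTails_of_fixed hc.symm]
    exact hcol c
  · have hc' := h.lt_apply hc
    have hlt := h.lt_cross hQ hb hcol hc'
    have hcross := (h.crosses _ hc').2.2
    rw [h.invol, h.cut_eq] at hlt hcross
    exact (hcol c).glue (hcol (t c)) hcross hlt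

theorem isCrossing_of_swapTails (h : IsExchange t θ v G) (hQ : ChainComparable Q)
    (hb : StrictAnti b) (hcol : ∀ c, IsColumn (b c) (e c) (G c))
    (hcross : IsCrossing (swapTails t θ G) j x) (hv : ¬ v < G j x) : IsCrossing G j x := by
  obtain ⟨i, hij, hbot, hlt⟩ := hcross
  rw [h.swapTails_of_not_lt hcol hv] at hbot hlt
  rcases lt_or_ge (θ i) (x + 1) with hx | hx
  swap
  · exact ⟨i, hij, hbot, by rwa [swapTails_of_le hx] at hlt⟩
  rw [swapTails_of_lt hx] at hlt
  rcases lt_trichotomy (t i) j with htj | rfl | hjt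
  · exact ⟨t i, htj, hbot, hlt⟩
  · have hθ : x ≤ θ i := not_lt.mp fun hx =>
      hv (h.lt_tail hcol (by rw [h.invol]; exact hij.ne) (by rwa [h.cut_eq]))
    obtain rfl : x = θ i := by lia
    exact ⟨i, h.crosses i hij⟩
  have hi : i < t i := hij.trans hjt
  -- The witness `t i` lies right of `j`; column `i` itself is a witness as well.
  refine ⟨i, ?_⟩
  rcases (Int.lt_add_one_iff.mp hx).eq_or_lt with rfl | hx
  · exact ((h.crosses i hi).left_or_right hQ hb hcol hij hjt).resolve_right fun hcross =>
      h.first i hi _ (sub_one_lt _) ⟨j, hcross⟩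
  refine ⟨hij, hbot, ?_⟩
  by_cases htop : G i (x + 1) = ⊤
  · rw [htop]
    exact hlt.trans_le le_top
  have hvi : v < G i x := h.lt_tail hcol hi.ne' hx
  have hnext : G i x < G i (x + 1) := (hcol i).lt (lt_add_one x)
    ((hcol i).le_of_ne_bot (hvi.trans_le ((hcol i).monotone (by lia))).ne_bot)
    (by linarith [(hcol i).lt_of_ne_top htop])
  exact (hQ hvi hnext (G j x)).resolve_right hv

theorem swap (h : IsExchange t θ v G) (hQ : ChainComparable Q) (hb : StrictAnti b)
    (hcol : ∀ c, IsColumn (b c) (e c) (G c)) : IsExchange t θ v (swapTails t θ G) where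
  invol := h.invol
  cut_eq := h.cut_eq
  value i hi := by rw [swapTails_of_le (h.cut_eq i).ge, h.value i hi]
  crosses i hi := by
    obtain ⟨-, hbot, -⟩ := h.crosses i hi
    rw [Crosses, swapTails_of_le (h.cut_eq i).ge, swapTails_of_lt (lt_add_one _)]
    refine ⟨hi, hbot, (hcol _).lt (lt_add_one _) ?_ ?_⟩
    · linarith [(hcol _).le_of_ne_bot hbot]
    · exact (hcol _).lt_of_ne_top (h.crosses i hi).2.2.ne_top
  first i hi x hx hcross := by
    refine h.first i hi x hx (h.isCrossing_of_swapTails hQ hb hcol hcross ?_)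
    rw [← h.value i hi]
    exact ((hcol _).monotone hx.le).not_gt

theorem crosses_swapTails_iff (h : IsExchange t θ v G) (hcol : ∀ c, IsColumn (b c) (e c) (G c))
    (hj : G j x = v) (i : C) : Crosses (swapTails t θ G) i j x ↔ Crosses G i j x := by
  rw [Crosses, Crosses, h.swapTails_of_not_lt hcol (hj ▸ lt_irrefl v), hj,
    h.lt_swapTails_iff hcol]

theorem minCrossings_subset (h : IsExchange t θ v G) (hQ : ChainComparable Q) (hb : StrictAnti b)
    (hcol : ∀ c, IsColumn (b c) (e c) (G c)) (hi : i < t i) :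
    minCrossings (swapTails t θ G) ⊆ minCrossings G := by
  rintro ⟨j, x⟩ ⟨hjx, hmin⟩
  have hv : ¬ v < G j x := by
    have := hmin _ _ ⟨i, (h.swap hQ hb hcol).crosses i hi⟩
    rwa [(h.swap hQ hb hcol).value i hi, h.lt_swapTails_iff hcol] at this
  refine ⟨h.isCrossing_of_swapTails hQ hb hcol hjx hv, fun j' x' hcross hlt => ?_⟩
  have hv' : ¬ v < G j' x' := fun hv' => hv (hv'.trans hlt)
  refine hmin j' x' ?_ ?_
  · refine (h.swap hQ hb hcol).isCrossing_of_swapTails hQ hb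
      (h.isColumn_swapTails hQ hb hcol) ?_ ?_
    · rwa [swapTails_swapTails h.invol h.cut_eq]
    · rwa [h.lt_swapTails_iff hcol]
  · rwa [h.swapTails_of_not_lt hcol hv', h.swapTails_of_not_lt hcol hv]

theorem minCrossings_swapTails (h : IsExchange t θ v G) (hQ : ChainComparable Q)
    (hb : StrictAnti b) (hcol : ∀ c, IsColumn (b c) (e c) (G c)) (hi : i < t i) :
    minCrossings (swapTails t θ G) = minCrossings G := by
  refine (h.minCrossings_subset hQ hb hcol hi).antisymm ?_
  have hsub := (h.swap hQ hb hcol).minCrossings_subset hQ hb (h.isColumn_swapTails hQ hb hcol) hi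
  rwa [swapTails_swapTails h.invol h.cut_eq] at hsub

end IsExchange

end Exchange

/-- A column of the infinite array obtained by cutting a cylinder of circumference `l` open and
unrolling it: the copy of column `idx` met in the given (possibly negative) turn. -/
@[ext]
structure Column (l : ℕ) where
  turn : ℤ
  idx : Fin l

namespace Column

variable {l : ℕ} {i j c : Column l} {x : ℤ}

/-- Translation of an unrolled column by `m` turns. -/
def shift (m : ℤ) (c : Column l) : Column l := ⟨c.turn + m, c.idx⟩

theorem shift_turn_sub_turn (h : c.idx = i.idx) : shift (c.turn - i.turn) i = c :=
  Column.ext (add_sub_cancel _ _) h.symm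

/-- The position of an unrolled column among the integers. -/
def pos (c : Column l) : ℤ := c.turn * l + (c.idx : ℕ)

section AffinePerm

/-- The affine permutation attached to a finite permutation `σ` and the winding numbers `k`.
Indexing `k` by values rather than by arguments of `σ` matches the Leibniz expansion
`Matrix.det_apply`, whose factors have row index `σ i`. -/
def affinePerm (k : Fin l → ℤ) (σ : Equiv.Perm (Fin l)) : Equiv.Perm (Column l) where
  toFun c := ⟨c.turn - k (σ c.idx), σ c.idx⟩
  invFun c := ⟨c.turn + k c.idx, σ⁻¹ c.idx⟩
  left_inv c := by simp
  right_inv c := by simp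

variable {k k' : Fin l → ℤ} {σ σ' : Equiv.Perm (Fin l)}

theorem affinePerm_apply : affinePerm k σ c = ⟨c.turn - k (σ c.idx), σ c.idx⟩ := rfl

theorem affinePerm_shift (m : ℤ) : affinePerm k σ (shift m c) = shift m (affinePerm k σ c) :=
  Column.ext (add_sub_right_comm _ _ _) rfl

theorem affinePerm_mul :
    affinePerm k σ * affinePerm k' σ' = affinePerm (k + k' ∘ ⇑σ⁻¹) (σ * σ') := by
  ext c
  · simp only [Equiv.Perm.mul_apply, affinePerm_apply, Pi.add_apply, Function.comp_apply,
      Equiv.Perm.inv_def, Equiv.symm_apply_apply]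
    ring
  · rfl

theorem affinePerm_inj : affinePerm k σ = affinePerm k' σ' ↔ k = k' ∧ σ = σ' := by
  refine ⟨fun h => ?_, fun ⟨hk, hσ⟩ => hk ▸ hσ ▸ rfl⟩
  have happly (i : Fin l) : k (σ i) = k' (σ' i) ∧ σ i = σ' i := by
    simpa [affinePerm_apply] using congrArg (· ⟨0, i⟩) h
  obtain rfl : σ = σ' := Equiv.ext fun i => (happly i).2
  exact ⟨funext fun i => by simpa using (happly (σ⁻¹ i)).1, rfl⟩

/-- The winding numbers of the affine reflection exchanging `i` with `j`. -/
def windingNumbers (i j : Column l) : Fin l → ℤ :=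
  Pi.single i.idx (j.turn - i.turn) - Pi.single j.idx (j.turn - i.turn)

theorem sum_windingNumbers : ∑ r, windingNumbers i j r = 0 := by
  simp [windingNumbers, Finset.sum_sub_distrib]

/-- The affine reflection exchanging, for every `m`, the translates by `m` turns of the unrolled
columns `i` and `j`. -/
def reflection (i j : Column l) : Equiv.Perm (Column l) :=
  affinePerm (windingNumbers i j) (Equiv.swap i.idx j.idx)

theorem reflection_shift (m : ℤ) : reflection i j (shift m c) = shift m (reflection i j c) :=
  affinePerm_shift m

theorem reflection_shift_left (hij : i.idx ≠ j.idx) (m : ℤ) :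
    reflection i j (shift m i) = shift m j := by
  ext
  · simp only [reflection, affinePerm_apply, shift, windingNumbers, Equiv.swap_apply_left,
      Pi.sub_apply, Pi.single_eq_same, Pi.single_eq_of_ne hij.symm]
    ring
  · simp [reflection, affinePerm_apply, shift]

theorem reflection_shift_right (hij : i.idx ≠ j.idx) (m : ℤ) :
    reflection i j (shift m j) = shift m i := by
  ext
  · simp only [reflection, affinePerm_apply, shift, windingNumbers, Equiv.swap_apply_right,
      Pi.sub_apply, Pi.single_eq_same, Pi.single_eq_of_ne hij]
    ring
  · simp [reflection, affinePerm_apply, shift]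

theorem reflection_left (hij : i.idx ≠ j.idx) : reflection i j i = j := by
  simpa [shift] using reflection_shift_left hij 0

theorem reflection_of_ne (hi : c.idx ≠ i.idx) (hj : c.idx ≠ j.idx) : reflection i j c = c := by
  simp [reflection, affinePerm_apply, windingNumbers, Equiv.swap_apply_of_ne_of_ne hi hj, hi, hj]

theorem reflection_involutive (hij : i.idx ≠ j.idx) : Function.Involutive (reflection i j) := by
  intro c
  by_cases hi : c.idx = i.idx
  · rw [← shift_turn_sub_turn hi, reflection_shift_left hij, reflection_shift_right hij]
  by_cases hj : c.idx = j.idx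
  · rw [← shift_turn_sub_turn hj, reflection_shift_right hij, reflection_shift_left hij]
  · rw [reflection_of_ne hi hj, reflection_of_ne hi hj]

end AffinePerm

section Order

variable [NeZero l]

/-- Unrolled columns, in order, are indexed by the integers. -/
def equivInt : Column l ≃ ℤ where
  toFun := pos
  invFun := fun n => ⟨((Int.divModEquiv l) n).1, ((Int.divModEquiv l) n).2⟩
  left_inv c := congrArg (fun p : ℤ × Fin l => Column.mk p.1 p.2)
    ((Int.divModEquiv l).apply_symm_apply (c.turn, c.idx))
  right_inv n := (Int.divModEquiv l).symm_apply_apply n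

instance : LinearOrder (Column l) := LinearOrder.lift' equivInt equivInt.injective

instance : Nonempty (Column l) := ⟨⟨0, 0⟩⟩

/-- `Column.equivInt` as an order isomorphism. -/
def orderIsoInt : Column l ≃o ℤ := ⟨equivInt, Iff.rfl⟩

instance : LocallyFiniteOrder (Column l) := OrderIso.locallyFiniteOrder orderIsoInt

theorem lt_iff_pos_lt_pos : i < j ↔ i.pos < j.pos := Iff.rfl

theorem covBy_iff_pos_add_one_eq : i ⋖ j ↔ i.pos + 1 = j.pos :=
  (apply_covBy_apply_iff orderIsoInt).symm.trans Order.covBy_iff_add_one_eq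

theorem covBy_iff :
    i ⋖ j ↔ j.turn = i.turn ∧ (i.idx : ℕ) + 1 = j.idx ∨
      j.turn = i.turn + 1 ∧ (i.idx : ℕ) + 1 = l ∧ (j.idx : ℕ) = 0 := by
  rw [covBy_iff_pos_add_one_eq, pos, pos]
  have hi := i.idx.isLt
  have hj := j.idx.isLt
  refine ⟨fun h => ?_, ?_⟩
  · have hdiff : (j.turn - i.turn) * (l : ℤ) = (i.idx : ℕ) + 1 - (j.idx : ℕ) := by linarith
    have hnonneg : 0 ≤ j.turn - i.turn := by
      by_contra!
      nlinarith
    have hle : j.turn - i.turn ≤ 1 := by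
      by_contra!
      nlinarith
    obtain hturn | hturn : j.turn - i.turn = 0 ∨ j.turn - i.turn = 1 := by lia
    all_goals rw [hturn] at hdiff; lia
  · rintro (⟨ht, hidx⟩ | ⟨ht, hidx, hidx'⟩) <;> rw [ht]
    · lia
    · rw [add_mul, one_mul]
      lia

theorem shift_lt_shift_iff {m : ℤ} : shift m i < shift m j ↔ i < j := by
  simp only [lt_iff_pos_lt_pos, pos, shift, add_mul, add_right_comm _ (m * (l : ℤ)),
    add_lt_add_iff_right]

theorem exists_eq_shift_of_lt_reflection (hidx : i.idx ≠ j.idx) (hij : i < j)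
    (hc : c < reflection i j c) : ∃ m, c = shift m i ∧ reflection i j c = shift m j := by
  have hi : c.idx = i.idx := by
    by_contra hi
    by_cases hj : c.idx = j.idx
    · rw [← shift_turn_sub_turn hj, reflection_shift_right hidx, shift_lt_shift_iff] at hc
      exact hc.not_gt hij
    · exact hc.ne' (reflection_of_ne hi hj)
  refine ⟨c.turn - i.turn, (shift_turn_sub_turn hi).symm, ?_⟩
  conv_lhs => rw [← shift_turn_sub_turn hi, reflection_shift_left hidx]

theorem turn_lt_of_lt (h : i < j) (hidx : i.idx = j.idx) : i.turn < j.turn := by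
  rw [lt_iff_pos_lt_pos, pos, pos, hidx, add_lt_add_iff_right] at h
  exact lt_of_mul_lt_mul_right h (Int.natCast_nonneg l)

theorem exists_pos_apply_eq_pos_add (f : Column l ≃o Column l) :
    ∃ m, ∀ c, (f c).pos = c.pos + m := by
  let g : ℤ ≃o ℤ := orderIsoInt.symm.trans (f.trans orderIsoInt)
  let g' : AddConstMap ℤ ℤ 1 1 := ⟨g, fun n => g.map_succ n⟩
  refine ⟨g 0, fun c => ?_⟩
  have hg : g' c.pos = g' 0 + c.pos := by
    simpa using AddConstMapClass.map_add_int g' 0 c.pos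
  calc (f c).pos = g c.pos := congrArg (fun c => (f c).pos) (equivInt.symm_apply_apply c).symm
    _ = g 0 + c.pos := hg
    _ = c.pos + g 0 := add_comm _ _

/-- An order automorphism of the unrolled columns is a translation, and the vanishing of the total
winding number excludes all translations but the identity. -/
theorem eq_zero_and_eq_one_of_strictMono_affinePerm {k : Fin l → ℤ} {σ : Equiv.Perm (Fin l)}
    (hk : ∑ i, k i = 0) (h : StrictMono (affinePerm k σ)) : k = 0 ∧ σ = 1 := by
  obtain ⟨m, hm⟩ := exists_pos_apply_eq_pos_add
    (h.orderIsoOfSurjective _ (affinePerm k σ).surjective)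
  replace hm (i : Fin l) : -k (σ i) * l + (σ i : ℕ) = (i : ℕ) + m := by
    simpa [pos, affinePerm_apply] using hm ⟨0, i⟩
  have hsum : (l : ℤ) * m = 0 := by
    have := Finset.sum_congr rfl fun i (_ : i ∈ Finset.univ) => hm i
    rw [Finset.sum_add_distrib, Finset.sum_add_distrib, ← Finset.sum_mul, Finset.sum_neg_distrib,
      Equiv.sum_comp σ k, Equiv.sum_comp σ fun i => ((i : ℕ) : ℤ), hk] at this
    simpa using this.symm
  obtain rfl : m = 0 := (mul_eq_zero.mp hsum).resolve_left (by exact_mod_cast NeZero.ne l)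
  have hid : affinePerm k σ = affinePerm 0 1 := by
    refine Equiv.ext fun c => equivInt.injective ?_
    change pos _ = pos _
    have := hm c.idx
    simp only [affinePerm_apply, pos, Pi.zero_apply, Equiv.Perm.one_apply, sub_mul]
    linarith
  exact affinePerm_inj.mp hid

end Order

end Column

section Unroll

open Column

variable {l : ℕ} {Q : Type*} {N : ℤ} {F : Fin l → ℤ → Q} {i j c : Column l} {x : ℤ}

/-- The periodic infinite array unrolled from the columns `F` of a cylindric array; a full turn
moves the diagonal coordinate by `N`. -/
def unroll (N : ℤ) (F : Fin l → ℤ → Q) (c : Column l) (x : ℤ) : Q := F c.idx (x + c.turn * N)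

/-- The endpoints, in the unrolled array, of columns with endpoints `a`. -/
def unrollEnd (N : ℤ) (a : Fin l → ℤ) (c : Column l) : ℤ := a c.idx - c.turn * N

theorem unroll_shift (m : ℤ) : unroll N F (shift m c) x = unroll N F c (x + m * N) := by
  simp only [unroll, shift, add_mul, add_assoc, add_comm (m * N)]

theorem unrollEnd_winding (k a : Fin l → ℤ) (σ : Equiv.Perm (Fin l)) :
    unrollEnd N (fun i => k (σ i) * N + a (σ i)) = unrollEnd N a ∘ affinePerm k σ := by
  funext c
  simp only [unrollEnd, Function.comp_apply, affinePerm_apply]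
  ring

/-- The cuts, in the translates of the unrolled columns `i` and `j`, along which tails are
exchanged if `i` and `j` are cut at `x`. The value at the other columns is irrelevant. -/
def cut (N : ℤ) (i j : Column l) (x : ℤ) (c : Column l) : ℤ :=
  x - (c.turn - if c.idx = i.idx then i.turn else j.turn) * N

theorem cut_shift (m : ℤ) : cut N i j x (shift m c) = cut N i j x c - m * N := by
  change x - (c.turn + m - if c.idx = i.idx then i.turn else j.turn) * N = _
  rw [cut]
  ring

theorem cut_left : cut N i j x i = x := by simp [cut]

theorem cut_right (hij : i.idx ≠ j.idx) : cut N i j x j = x := by simp [cut, hij.symm]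

theorem cut_reflection (hij : i.idx ≠ j.idx) (c : Column l) :
    cut N i j x (reflection i j c) = cut N i j x c := by
  by_cases hi : c.idx = i.idx
  · rw [← shift_turn_sub_turn hi, reflection_shift_left hij, cut_shift, cut_shift, cut_left,
      cut_right hij]
  by_cases hj : c.idx = j.idx
  · rw [← shift_turn_sub_turn hj, reflection_shift_right hij, cut_shift, cut_shift, cut_left,
      cut_right hij]
  · rw [reflection_of_ne hi hj]

/-- Exchange the tails of the translates of the unrolled columns `i` and `j` below `x`. -/
def exchange (N : ℤ) (i j : Column l) (x : ℤ) (F : Fin l → ℤ → Q) (r : Fin l) : ℤ → Q :=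
  swapTails (reflection i j) (cut N i j x) (unroll N F) ⟨0, r⟩

theorem unroll_exchange :
    unroll N (exchange N i j x F) = swapTails (reflection i j) (cut N i j x) (unroll N F) := by
  funext c y
  have hc : c = shift c.turn ⟨0, c.idx⟩ := Column.ext (zero_add _).symm rfl
  have hcut : y ≤ cut N i j x c ↔ y + c.turn * N ≤ cut N i j x ⟨0, c.idx⟩ := by
    conv_lhs => rw [hc, cut_shift, le_sub_iff_add_le]
  have htail : unroll N F (reflection i j c) y =
      unroll N F (reflection i j ⟨0, c.idx⟩) (y + c.turn * N) := by
    conv_lhs => rw [hc, reflection_shift, unroll_shift]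
  have hhead : unroll N F c y = unroll N F ⟨0, c.idx⟩ (y + c.turn * N) := by
    conv_lhs => rw [hc, unroll_shift]
  rw [swapTails, hhead, htail, if_congr hcut rfl rfl]
  rfl

theorem exchange_exchange (hij : i.idx ≠ j.idx) :
    exchange N i j x (exchange N i j x F) = F := by
  funext r y
  rw [exchange, unroll_exchange,
    swapTails_swapTails (reflection_involutive hij) (cut_reflection hij)]
  simp [unroll]

variable [PartialOrder Q] [BoundedOrder Q] {b e : Fin l → ℤ}

theorem isColumn_unroll (hF : ∀ i, IsColumn (b i) (e i) (F i)) (c : Column l) :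
    IsColumn (unrollEnd N b c) (unrollEnd N e c) (unroll N F c) :=
  (hF c.idx).shift _

variable [NeZero l]

theorem crosses_unroll_shift_iff (m : ℤ) :
    Crosses (unroll N F) (shift m i) (shift m j) (x - m * N) ↔ Crosses (unroll N F) i j x := by
  simp only [Crosses, shift_lt_shift_iff, unroll_shift, sub_add_cancel, sub_add_eq_add_sub]

theorem idx_ne_of_crosses (hN : 0 < N) (hF : ∀ i, Monotone (F i))
    (h : Crosses (unroll N F) i j x) : i.idx ≠ j.idx := by
  obtain ⟨hij, -, hlt⟩ := h
  intro hidx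
  rw [unroll, unroll, hidx] at hlt
  refine (hF j.idx ?_).not_gt hlt
  nlinarith [turn_lt_of_lt hij hidx]

theorem isExchange_reflection (hN : 0 < N) (hF : ∀ i, IsColumn (b i) (e i) (F i))
    (hij : Crosses (unroll N F) i j x) (hmin : (j, x) ∈ minCrossings (unroll N F)) :
    IsExchange (reflection i j) (cut N i j x) (unroll N F j x) (unroll N F) := by
  have hidx := idx_ne_of_crosses hN (fun i => (hF i).monotone) hij
  have hpair (c) (hc : c < reflection i j c) :
      ∃ m, c = shift m i ∧ reflection i j c = shift m j ∧ cut N i j x c = x - m * N := by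
    obtain ⟨m, hm, ht⟩ := exists_eq_shift_of_lt_reflection hidx hij.1 hc
    exact ⟨m, hm, ht, by rw [hm, cut_shift, cut_left]⟩
  refine ⟨reflection_involutive hidx, cut_reflection hidx, fun c hc => ?_, fun c hc => ?_,
    fun c hc y hy hcross => ?_⟩ <;> obtain ⟨m, hcm, ht, hcut⟩ := hpair c hc
  · rw [ht, hcut, hcm, crosses_unroll_shift_iff]
    exact hij
  · rw [ht, hcut, unroll_shift, sub_add_cancel]
  · rw [hcut] at hy
    rw [ht] at hcross
    obtain ⟨i', hi'⟩ := hcross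
    have hi'' : Crosses (unroll N F) (shift (-m) i') j (y + m * N) := by
      rw [← crosses_unroll_shift_iff m]
      convert hi' using 1
      · simp [shift]
      · ring
    refine hmin.2 j (y + m * N) ⟨_, hi''⟩ ((isColumn_unroll hF j).lt (by linarith) ?_ ?_)
    · linarith [(isColumn_unroll hF j).le_of_ne_bot hi''.2.1]
    · exact (isColumn_unroll hF j).lt_of_ne_top hi''.2.2.ne_top

end Unroll

section Weights

variable {P : Type*}

/-- Entries of a column over `P`: genuine entries, padded by `⊥` above and `⊤` below. -/
abbrev Entry (P : Type*) := WithBot (WithTop P)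

/-- The weight of an entry: the variable attached to it, and `1` for padding. -/
def entryWeight (q : Entry P) : MvPolynomial P ℤ := ((q.unbotD ⊤).map X).untopD 1

/-- The weight of a column: the product of the weights of its entries. -/
def columnWeight (g : ℤ → Entry P) : MvPolynomial P ℤ := ∏ᶠ x, entryWeight (g x)

/-- The weight of an array: the product of the weights of its entries. -/
def arrayWeight {ι : Type*} (F : ι → ℤ → Entry P) : MvPolynomial P ℤ :=
  ∏ᶠ p : ι × ℤ, entryWeight (F p.1 p.2)

theorem exchange_eq_comp {l : ℕ} {Q : Type*} {N x y : ℤ} {i j : Column l} {F : Fin l → ℤ → Q}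
    {r : Fin l} : exchange N i j x F r y = F.uncurry (exchange N i j x Prod.mk r y) := by
  simp only [exchange, swapTails, unroll, zero_mul, add_zero, Function.uncurry_def]
  split_ifs <;> rfl

/-- Exchanging the tails of the array whose entry in every cell is that cell itself permutes the
cells, so every exchange of tails is a rearrangement of cells. -/
theorem arrayWeight_exchange {l : ℕ} {N x : ℤ} {i j : Column l} (hij : i.idx ≠ j.idx)
    (F : Fin l → ℤ → Entry P) : arrayWeight (exchange N i j x F) = arrayWeight F := by
  let move (p : Fin l × ℤ) : Fin l × ℤ := exchange N i j x Prod.mk p.1 p.2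
  have hmove : Function.Involutive move := fun p => by
    have := congrFun₂ (exchange_exchange (N := N) (x := x) (F := Prod.mk) hij) p.1 p.2
    rwa [exchange_eq_comp] at this
  calc arrayWeight (exchange N i j x F)
      = ∏ᶠ p : Fin l × ℤ, entryWeight (F.uncurry (hmove.toPerm move p)) :=
        finprod_congr fun p => congrArg entryWeight exchange_eq_comp
    _ = arrayWeight F :=
        finprod_comp_equiv (hmove.toPerm move) (f := fun p => entryWeight (F.uncurry p))

variable [PartialOrder P] {b e : ℤ} {g : ℤ → Entry P}

theorem IsColumn.mulSupport_subset (h : IsColumn b e g) :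
    Function.mulSupport (fun x => entryWeight (g x)) ⊆ Set.Ico b e := by
  intro x hx
  refine ⟨h.le_of_ne_bot fun hbot => hx ?_, h.lt_of_ne_top fun htop => hx ?_⟩
  · exact congrArg entryWeight hbot
  · exact congrArg entryWeight htop

theorem arrayWeight_eq_prod {ι : Type*} [Fintype ι] {b e : ι → ℤ} {F : ι → ℤ → Entry P}
    (h : ∀ i, IsColumn (b i) (e i) (F i)) : arrayWeight F = ∏ i, columnWeight (F i) := by
  have hfin : (Function.mulSupport fun p : ι × ℤ => entryWeight (F p.1 p.2)).Finite := by
    refine (Set.finite_iUnion fun i =>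
      (Set.finite_Ico (b i) (e i)).image (Prod.mk i)).subset fun p hp => ?_
    exact Set.mem_iUnion.mpr ⟨p.1, p.2, (h p.1).mulSupport_subset hp, rfl⟩
  rw [arrayWeight, finprod_curry _ hfin, finprod_eq_prod_of_fintype]
  rfl

end Weights

section Fillings

variable {P : Type*} {b : ℤ} {k : ℕ} {h : Fin k → P} {x : ℤ}

/-- The padded column starting at `b` with entries `h`. -/
def toColumn (b : ℤ) (h : Fin k → P) (x : ℤ) : Entry P :=
  if x < b then ⊥
  else if hx : (x - b).toNat < k then ((h ⟨(x - b).toNat, hx⟩ : WithTop P) : Entry P)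
  else ⊤

theorem toColumn_of_lt (hx : x < b) : toColumn b h x = ⊥ := if_pos hx

theorem toColumn_of_le (hx : b + k ≤ x) : toColumn b h x = ⊤ := by
  rw [toColumn, if_neg (by lia), dif_neg (by lia)]

@[simp] theorem toColumn_add (p : Fin k) : toColumn b h (b + (p : ℕ)) = (h p : WithTop P) := by
  have hp : (b + ((p : ℕ) : ℤ) - b).toNat = p := by lia
  simp only [toColumn, hp, p.isLt, dif_pos, if_neg (show ¬ b + ((p : ℕ) : ℤ) < b by lia), Fin.eta]

theorem toColumn_injective : Function.Injective (toColumn b : (Fin k → P) → ℤ → Entry P) := by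
  intro h h' heq
  funext p
  simpa using congrFun heq (b + (p : ℕ))

theorem exists_eq_add_of_mem_Ico (hb : b ≤ x) (he : x < b + k) : ∃ p : Fin k, x = b + (p : ℕ) :=
  ⟨⟨(x - b).toNat, by lia⟩, by simp only; lia⟩

theorem columnWeight_toColumn : columnWeight (toColumn b h) = ∏ p, X (h p) := by
  have hinj : Function.Injective fun p : Fin k => b + ((p : ℕ) : ℤ) :=
    fun p q hpq => Fin.ext (by simpa using hpq)
  have hsupp : Function.mulSupport (fun x => entryWeight (toColumn b h x)) ⊆
      Finset.univ.map ⟨_, hinj⟩ := by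
    intro x hx
    rw [Finset.coe_map, Finset.coe_univ, Set.image_univ]
    rcases lt_or_ge x b with hb | hb
    · exact absurd (congrArg entryWeight (toColumn_of_lt hb)) hx
    rcases lt_or_ge x (b + k) with he | he
    · obtain ⟨p, rfl⟩ := exists_eq_add_of_mem_Ico hb he
      exact ⟨p, rfl⟩
    · exact absurd (congrArg entryWeight (toColumn_of_le he)) hx
  rw [columnWeight, finprod_eq_prod_of_mulSupport_subset _ hsupp, Finset.prod_map]
  exact Finset.prod_congr rfl fun p _ => congrArg entryWeight (toColumn_add p)

variable [PartialOrder P]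

theorem isColumn_toColumn (hh : StrictMono h) : IsColumn b (b + k) (toColumn b h) where
  le := by lia
  eq_bot_iff x := by
    refine ⟨fun hx => not_le.mp fun hb => ?_, toColumn_of_lt⟩
    rcases lt_or_ge x (b + k) with he | he
    · obtain ⟨p, rfl⟩ := exists_eq_add_of_mem_Ico hb he
      simp at hx
    · simp [toColumn_of_le he] at hx
  eq_top_iff x := by
    refine ⟨fun hx => not_lt.mp fun he => ?_, toColumn_of_le⟩
    rcases lt_or_ge x b with hb | hb
    · simp [toColumn_of_lt hb] at hx
    · obtain ⟨p, rfl⟩ := exists_eq_add_of_mem_Ico hb he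
      exact WithTop.coe_ne_top (WithBot.coe_injective ((toColumn_add p).symm.trans hx))
  strictMonoOn x hx y hy hxy := by
    obtain ⟨p, rfl⟩ := exists_eq_add_of_mem_Ico hx.1 hx.2
    obtain ⟨q, rfl⟩ := exists_eq_add_of_mem_Ico hy.1 hy.2
    simp only [toColumn_add, WithBot.coe_lt_coe, WithTop.coe_lt_coe]
    exact hh (by simpa using hxy)

theorem IsColumn.exists_toColumn_eq {g : ℤ → Entry P} (hg : IsColumn b (b + k) g) :
    ∃ h : Fin k → P, StrictMono h ∧ toColumn b h = g := by
  have hentry (p : Fin k) : ∃ a : P, ((a : WithTop P) : Entry P) = g (b + (p : ℕ)) := by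
    obtain ⟨q, hq⟩ := WithBot.ne_bot_iff_exists.mp (hg.ne_bot (x := b + (p : ℕ)) (by lia))
    obtain ⟨a, rfl⟩ := WithTop.ne_top_iff_exists.mp fun htop : q = ⊤ =>
      hg.ne_top (x := b + (p : ℕ)) (by simp) (by rw [← hq, htop]; rfl)
    exact ⟨a, hq⟩
  choose h hh using hentry
  refine ⟨h, fun p q hpq => ?_, funext fun x => ?_⟩
  · have := hg.lt (x := b + (p : ℕ)) (y := b + (q : ℕ)) (by simpa using hpq) (by lia) (by simp)
    rwa [← hh, ← hh, WithBot.coe_lt_coe, WithTop.coe_lt_coe] at this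
  rcases lt_or_ge x b with hb | hb
  · rw [toColumn_of_lt hb, (hg.eq_bot_iff x).mpr hb]
  rcases lt_or_ge x (b + k) with he | he
  · obtain ⟨p, rfl⟩ := exists_eq_add_of_mem_Ico hb he
    rw [toColumn_add, hh]
  · rw [toColumn_of_le he, (hg.eq_top_iff x).mpr he]

theorem setOf_isColumn_eq_image :
    {g : ℤ → Entry P | IsColumn b (b + k) g} = toColumn b '' {h : Fin k → P | StrictMono h} :=
  Set.Subset.antisymm (fun _ hg => hg.exists_toColumn_eq)
    (Set.image_subset_iff.mpr fun _ hh => isColumn_toColumn hh)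

variable (P)

theorem finite_setOf_isColumn [Finite P] (b e : ℤ) : {g : ℤ → Entry P | IsColumn b e g}.Finite := by
  rcases lt_or_ge e b with hlt | hle
  · exact Set.finite_empty.subset fun g hg => hlt.not_ge hg.le
  · obtain ⟨k, rfl⟩ := Int.le.dest hle
    rw [setOf_isColumn_eq_image]
    exact (Set.toFinite _).image _

/-- The columns with cells `b, …, e - 1`, as a finset. -/
def columns [Finite P] (b e : ℤ) : Finset (ℤ → Entry P) := (finite_setOf_isColumn P b e).toFinset

variable {P}

theorem mem_columns [Finite P] {b e : ℤ} {g : ℤ → Entry P} : g ∈ columns P b e ↔ IsColumn b e g :=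
  Set.Finite.mem_toFinset _

theorem ePz_sub_eq_sum_columns [Fintype P] (b e : ℤ) :
    ePz P (e - b) = ∑ g ∈ columns P b e, columnWeight g := by
  rcases lt_or_ge e b with hlt | hle
  · rw [ePz, if_neg (by lia), Finset.sum_eq_zero]
    exact fun g hg => absurd (mem_columns.mp hg).le hlt.not_ge
  · obtain ⟨k, rfl⟩ := Int.le.dest hle
    rw [ePz, if_pos (by lia), add_sub_cancel_left, Int.toNat_natCast, eP]
    refine Finset.sum_bij (fun h _ => toColumn b h) (fun h hh => ?_) (fun _ _ _ _ heq => ?_)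
      (fun g hg => ?_) (fun h _ => columnWeight_toColumn.symm)
    · exact mem_columns.mpr (isColumn_toColumn (Finset.mem_filter.mp hh).2)
    · exact toColumn_injective heq
    · obtain ⟨h, hh, rfl⟩ := (mem_columns.mp hg).exists_toColumn_eq
      exact ⟨h, Finset.mem_filter.mpr ⟨Finset.mem_univ h, hh⟩, rfl⟩

end Fillings

section Windings

variable {l : ℕ} {N : ℤ} {a b : Fin l → ℤ}

/-- The index set of the sum of determinants expanded by the Leibniz formula: winding numbers of
total `0` together with a permutation, i.e. an element of the affine symmetric group. -/
abbrev Winding (l : ℕ) := {k : Fin l → ℤ // ∑ i, k i = 0} × Equiv.Perm (Fin l)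

/-- The winding that leaves all columns in place. -/
def Winding.trivial : Winding l := (⟨0, by simp⟩, 1)

/-- The ends of the columns of the arrays contributing to the term indexed by `w`. -/
def windingEnd (N : ℤ) (a : Fin l → ℤ) (w : Winding l) (i : Fin l) : ℤ :=
  w.1.1 (w.2 i) * N + a (w.2 i)

theorem windingEnd_trivial : windingEnd N a Winding.trivial = a :=
  funext fun i => by simp [windingEnd, Winding.trivial]

theorem sum_windingEnd (w : Winding l) : ∑ i, windingEnd N a w i = ∑ i, a i := by
  simp only [windingEnd]
  rw [Equiv.sum_comp w.2 fun i => w.1.1 i * N + a i, Finset.sum_add_distrib, ← Finset.sum_mul,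
    w.1.2, zero_mul, zero_add]

theorem finite_setOf_le_windingEnd (hN : N ≠ 0) (a b : Fin l → ℤ) :
    {w : Winding l | b ≤ windingEnd N a w}.Finite := by
  have hinj : Function.Injective fun w : Winding l => (w.2, windingEnd N a w) := by
    rintro ⟨⟨k, hk⟩, σ⟩ ⟨⟨k', hk'⟩, σ'⟩ h
    obtain ⟨rfl, h⟩ := Prod.mk.inj h
    obtain rfl : k = k' := σ.surjective.injective_comp_right <| funext fun i => by
      simpa [windingEnd, hN] using congrFun h i
    rfl
  refine Set.Finite.of_injOn (t := Set.univ ×ˢ Set.Icc b fun i => b i + (∑ i, a i - ∑ i, b i))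
    (fun w (hw : b ≤ windingEnd N a w) => ⟨trivial, hw, fun i => ?_⟩) hinj.injOn
    (Set.finite_univ.prod (Set.finite_Icc _ _))
  have := Finset.single_le_sum (f := fun i => windingEnd N a w i - b i)
    (fun i _ => sub_nonneg.mpr (hw i)) (Finset.mem_univ i)
  rw [Finset.sum_sub_distrib, sum_windingEnd] at this
  exact sub_le_iff_le_add'.mp this

/-- Composition of a winding with the affine reflection exchanging the unrolled columns `i`
and `j`. -/
def Winding.reflect (w : Winding l) (i j : Column l) : Winding l :=
  (⟨w.1.1 + Column.windingNumbers i j ∘ ⇑w.2⁻¹, by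
    simp only [Pi.add_apply, Function.comp_apply, Finset.sum_add_distrib, w.1.2, zero_add]
    rw [Equiv.sum_comp w.2⁻¹, Column.sum_windingNumbers]⟩, w.2 * Equiv.swap i.idx j.idx)

variable {i j : Column l} {w : Winding l}

theorem Winding.affinePerm_reflect :
    Column.affinePerm (w.reflect i j).1.1 (w.reflect i j).2 =
      Column.affinePerm w.1.1 w.2 * Column.reflection i j :=
  Column.affinePerm_mul.symm

theorem Winding.reflect_reflect (hij : i.idx ≠ j.idx) : (w.reflect i j).reflect i j = w := by
  have hrefl : Column.reflection i j * Column.reflection i j = 1 :=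
    Equiv.ext (Column.reflection_involutive hij)
  have h : Column.affinePerm ((w.reflect i j).reflect i j).1.1 ((w.reflect i j).reflect i j).2 =
      Column.affinePerm w.1.1 w.2 := by
    rw [affinePerm_reflect, affinePerm_reflect, mul_assoc, hrefl, mul_one]
  obtain ⟨hk, hσ⟩ := Column.affinePerm_inj.mp h
  exact Prod.ext (Subtype.ext hk) hσ

theorem Winding.sign_reflect (hij : i.idx ≠ j.idx) :
    (w.reflect i j).2.sign = -w.2.sign := by
  simp [reflect, Equiv.Perm.sign_mul, Equiv.Perm.sign_swap hij]

theorem unrollEnd_windingEnd :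
    unrollEnd N (windingEnd N a w) = unrollEnd N a ∘ Column.affinePerm w.1.1 w.2 :=
  unrollEnd_winding _ _ _

theorem unrollEnd_windingEnd_reflect :
    unrollEnd N (windingEnd N a (w.reflect i j)) =
      unrollEnd N (windingEnd N a w) ∘ Column.reflection i j := by
  rw [unrollEnd_windingEnd, unrollEnd_windingEnd, Winding.affinePerm_reflect]
  rfl

end Windings

section CanonicalCrossing

variable {C Q : Type*} [LinearOrder C] [Nonempty C] [PartialOrder Q] [BoundedOrder Q]
  {G : C → ℤ → Q} {j : C} {x : ℤ}

/-- A choice of a minimal crossing of `G` that depends only on the set of minimal crossings. It is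
arbitrary if `G` has no crossing. -/
def chosenCrossing (G : C → ℤ → Q) : C × ℤ := Classical.epsilon (· ∈ minCrossings G)

/-- A choice of a column that crosses at `chosenCrossing G`. -/
def chosenColumn (G : C → ℤ → Q) : C :=
  Classical.epsilon fun i => Crosses G i (chosenCrossing G).1 (chosenCrossing G).2

theorem chosenCrossing_mem [WellFoundedLT Q] (h : IsCrossing G j x) :
    chosenCrossing G ∈ minCrossings G :=
  Classical.epsilon_spec (minCrossings_nonempty h)

theorem crosses_chosenColumn [WellFoundedLT Q] (h : IsCrossing G j x) :
    Crosses G (chosenColumn G) (chosenCrossing G).1 (chosenCrossing G).2 :=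
  Classical.epsilon_spec (chosenCrossing_mem h).1

namespace IsExchange

variable {b e : C → ℤ} {t : C → C} {θ : C → ℤ} {v : Q} {i : C}

theorem chosenCrossing_swapTails (h : IsExchange t θ v G) (hQ : ChainComparable Q)
    (hb : StrictAnti b) (hcol : ∀ c, IsColumn (b c) (e c) (G c)) (hi : i < t i) :
    chosenCrossing (swapTails t θ G) = chosenCrossing G := by
  rw [chosenCrossing, h.minCrossings_swapTails hQ hb hcol hi, chosenCrossing]

theorem chosenColumn_swapTails (h : IsExchange t θ v G) (hQ : ChainComparable Q)
    (hb : StrictAnti b) (hcol : ∀ c, IsColumn (b c) (e c) (G c)) (hi : i < t i)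
    (hv : G (chosenCrossing G).1 (chosenCrossing G).2 = v) :
    chosenColumn (swapTails t θ G) = chosenColumn G := by
  simp only [chosenColumn, h.chosenCrossing_swapTails hQ hb hcol hi,
    h.crosses_swapTails_iff hcol hv]

end IsExchange

end CanonicalCrossing

section WindingArrays

variable {l : ℕ} {P : Type*} {N x : ℤ} {i j : Column l}

/-- The pairs of a winding and an array that index the fully expanded sum of determinants. -/
abbrev WindingArray (l : ℕ) (P : Type*) := (_ : Winding l) × (Fin l → ℤ → Entry P)

/-- The signed weight with which a winding array enters the expansion. -/
def signedWeight (s : WindingArray l P) : MvPolynomial P ℤ := s.1.2.sign • arrayWeight s.2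

/-- Exchange the tails of the unrolled columns `i` and `j` below `x`, and adjust the winding to the
new ends of the columns. -/
def exchangeAt (N : ℤ) (i j : Column l) (x : ℤ) (s : WindingArray l P) : WindingArray l P :=
  ⟨s.1.reflect i j, exchange N i j x s.2⟩

variable {s : WindingArray l P}

theorem signedWeight_exchangeAt (hij : i.idx ≠ j.idx) :
    signedWeight (exchangeAt N i j x s) = -signedWeight s := by
  rw [signedWeight, exchangeAt, Winding.sign_reflect hij, arrayWeight_exchange hij, Units.neg_smul,
    signedWeight]

theorem exchangeAt_exchangeAt (hij : i.idx ≠ j.idx) :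
    exchangeAt N i j x (exchangeAt N i j x s) = s := by
  simp only [exchangeAt, Winding.reflect_reflect hij, exchange_exchange hij]

end WindingArrays

section Expansion

variable {l : ℕ} {P : Type*} [PartialOrder P] {N : ℤ} {a b : Fin l → ℤ}

/-- The arrays whose `i`-th column has cells `b i, …, a i - 1`. -/
def arrays [Finite P] (b a : Fin l → ℤ) : Finset (Fin l → ℤ → Entry P) :=
  Fintype.piFinset fun i => columns P (b i) (a i)

theorem mem_arrays [Finite P] {F : Fin l → ℤ → Entry P} :
    F ∈ arrays b a ↔ ∀ i, IsColumn (b i) (a i) (F i) := by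
  simp only [arrays, Fintype.mem_piFinset, mem_columns]

theorem det_ePz_eq_sum_arrays [Fintype P] (k : {k : Fin l → ℤ // ∑ i, k i = 0}) :
    Matrix.det (Matrix.of fun i j => ePz P (k.1 i * N + a i - b j)) =
      ∑ σ, ∑ F ∈ arrays b (windingEnd N a (k, σ)), signedWeight ⟨(k, σ), F⟩ := by
  rw [Matrix.det_apply]
  refine Finset.sum_congr rfl fun σ _ => ?_
  simp only [Matrix.of_apply, ePz_sub_eq_sum_columns, Finset.prod_univ_sum, signedWeight,
    ← Finset.smul_sum]
  congr 1
  exact Finset.sum_congr rfl fun F hF => (arrayWeight_eq_prod (mem_arrays.mp hF)).symm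

/-- The winding arrays that contribute to the sum of determinants. -/
def windingArrays [Finite P] (hN : N ≠ 0) (b a : Fin l → ℤ) : Finset (WindingArray l P) :=
  (finite_setOf_le_windingEnd hN a b).toFinset.sigma fun w => arrays b (windingEnd N a w)

theorem mem_windingArrays [Finite P] {hN : N ≠ 0} {s : WindingArray l P} :
    s ∈ windingArrays hN b a ↔ ∀ i, IsColumn (b i) (windingEnd N a s.1 i) (s.2 i) := by
  rw [windingArrays, Finset.mem_sigma, Set.Finite.mem_toFinset, mem_arrays]
  exact and_iff_right_of_imp fun h i => (h i).le

theorem finsum_det_ePz_eq_sum_windingArrays [Fintype P] (hN : N ≠ 0) (b a : Fin l → ℤ) :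
    ∑ᶠ k : {k : Fin l → ℤ // ∑ i, k i = 0},
        Matrix.det (Matrix.of fun i j => ePz P (k.1 i * N + a i - b j)) =
      ∑ s ∈ windingArrays hN b a, signedWeight s := by
  let term (w : Winding l) : MvPolynomial P ℤ :=
    ∑ F ∈ arrays b (windingEnd N a w), signedWeight ⟨w, F⟩
  have hsupp : Function.support term ⊆ (finite_setOf_le_windingEnd hN a b).toFinset := by
    intro w hw
    obtain ⟨F, hF, -⟩ := Finset.exists_ne_zero_of_sum_ne_zero hw
    rw [Set.Finite.coe_toFinset]
    exact fun i => (mem_arrays.mp hF i).le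
  calc _ = ∑ᶠ k, ∑ᶠ σ, term (k, σ) := finsum_congr fun k => by
        rw [det_ePz_eq_sum_arrays, finsum_eq_sum_of_fintype]
    _ = ∑ᶠ w, term w :=
        (finsum_curry term ((Finset.finite_toSet _).subset hsupp)).symm
    _ = ∑ s ∈ windingArrays hN b a, signedWeight s := by
        rw [finsum_eq_sum_of_support_subset _ hsupp, windingArrays, Finset.sum_sigma]

end Expansion

section Cancellation

variable {l : ℕ} [NeZero l] {P : Type*} [PartialOrder P] {N : ℤ} {a b e : Fin l → ℤ}
  {F : Fin l → ℤ → Entry P} {s : WindingArray l P}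

/-- The array `F` on the cylinder has no crossings. -/
def CrossingFree (N : ℤ) (F : Fin l → ℤ → Entry P) : Prop :=
  ∀ i j x, ¬ Crosses (unroll N F) i j x

theorem not_crossingFree_iff : ¬ CrossingFree N F ↔ ∃ j x, IsCrossing (unroll N F) j x := by
  simp only [CrossingFree, IsCrossing, not_forall, not_not]
  exact ⟨fun ⟨i, j, x, h⟩ => ⟨j, x, i, h⟩, fun ⟨j, x, i, h⟩ => ⟨i, j, x, h⟩⟩

/-- The sign-reversing involution: exchange tails at the chosen crossing. -/
def exchangeChosen (N : ℤ) (s : WindingArray l P) : WindingArray l P :=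
  exchangeAt N (chosenColumn (unroll N s.2)) (chosenCrossing (unroll N s.2)).1
    (chosenCrossing (unroll N s.2)).2 s

/-- Without crossings the ends of the unrolled columns are in order, which leaves only the trivial
winding. -/
theorem winding_eq_trivial_of_crossingFree (ha : StrictAnti (unrollEnd N a))
    (hb : StrictAnti (unrollEnd N b)) (hs : ∀ i, IsColumn (b i) (windingEnd N a s.1 i) (s.2 i))
    (h : CrossingFree N s.2) : s.1 = .trivial := by
  have hend := strictAnti_end_of_not_crosses hb (isColumn_unroll hs) h
  rw [unrollEnd_windingEnd] at hend
  have hmono : StrictMono (Column.affinePerm s.1.1.1 s.1.2) := fun i j hij =>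
    ha.lt_iff_gt.mp (hend hij)
  obtain ⟨hk, hσ⟩ := Column.eq_zero_and_eq_one_of_strictMono_affinePerm s.1.1.2 hmono
  exact Prod.ext (Subtype.ext hk) hσ

variable [Finite P]

theorem idx_chosenColumn_ne (hN : 0 < N) (hF : ∀ i, IsColumn (b i) (e i) (F i))
    (h : ¬ CrossingFree N F) :
    (chosenColumn (unroll N F)).idx ≠ (chosenCrossing (unroll N F)).1.idx := by
  obtain ⟨j, x, hx⟩ := not_crossingFree_iff.mp h
  exact idx_ne_of_crosses hN (fun i => (hF i).monotone) (crosses_chosenColumn hx)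

theorem isExchange_chosen (hN : 0 < N) (hF : ∀ i, IsColumn (b i) (e i) (F i))
    (h : ¬ CrossingFree N F) :
    IsExchange (Column.reflection (chosenColumn (unroll N F)) (chosenCrossing (unroll N F)).1)
      (cut N (chosenColumn (unroll N F)) (chosenCrossing (unroll N F)).1
        (chosenCrossing (unroll N F)).2)
      (unroll N F (chosenCrossing (unroll N F)).1 (chosenCrossing (unroll N F)).2)
      (unroll N F) := by
  obtain ⟨j, x, hx⟩ := not_crossingFree_iff.mp h
  exact isExchange_reflection hN hF (crosses_chosenColumn hx) (chosenCrossing_mem hx)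

theorem chosenColumn_lt_reflection (hN : 0 < N) (hF : ∀ i, IsColumn (b i) (e i) (F i))
    (h : ¬ CrossingFree N F) :
    chosenColumn (unroll N F) <
      Column.reflection (chosenColumn (unroll N F)) (chosenCrossing (unroll N F)).1
        (chosenColumn (unroll N F)) := by
  rw [Column.reflection_left (idx_chosenColumn_ne hN hF h)]
  obtain ⟨j, x, hx⟩ := not_crossingFree_iff.mp h
  exact (crosses_chosenColumn hx).1

theorem not_crossingFree_exchangeChosen (hN : 0 < N) (hP : ChainComparable P)
    (hb : StrictAnti (unrollEnd N b)) (hs : ∀ i, IsColumn (b i) (e i) (s.2 i))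
    (h : ¬ CrossingFree N s.2) : ¬ CrossingFree N (exchangeChosen N s).2 := by
  have hswap := (isExchange_chosen hN hs h).swap hP.withTop.withBot hb (isColumn_unroll hs)
  rw [not_crossingFree_iff, exchangeChosen, exchangeAt, unroll_exchange]
  exact ⟨_, _, _, hswap.crosses _ (chosenColumn_lt_reflection hN hs h)⟩

theorem exchangeChosen_exchangeChosen (hN : 0 < N) (hP : ChainComparable P)
    (hb : StrictAnti (unrollEnd N b)) (hs : ∀ i, IsColumn (b i) (e i) (s.2 i))
    (h : ¬ CrossingFree N s.2) : exchangeChosen N (exchangeChosen N s) = s := by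
  have hexch := isExchange_chosen hN hs h
  have hlt := chosenColumn_lt_reflection hN hs h
  have hcross := hexch.chosenCrossing_swapTails hP.withTop.withBot hb (isColumn_unroll hs) hlt
  have hcol := hexch.chosenColumn_swapTails hP.withTop.withBot hb (isColumn_unroll hs) hlt rfl
  rw [← unroll_exchange] at hcross hcol
  conv_lhs => rw [exchangeChosen]
  simp only [exchangeChosen, exchangeAt] at hcross hcol ⊢
  rw [hcross, hcol]
  exact exchangeAt_exchangeAt (idx_chosenColumn_ne hN hs h)

theorem exchangeChosen_mem (hN : 0 < N) (hP : ChainComparable P)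
    (hb : StrictAnti (unrollEnd N b)) (hs : s ∈ windingArrays hN.ne' b a)
    (h : ¬ CrossingFree N s.2) :
    exchangeChosen N s ∈ windingArrays hN.ne' b a := by
  rw [mem_windingArrays] at hs ⊢
  intro r
  have hcol := (isExchange_chosen hN hs h).isColumn_swapTails hP.withTop.withBot hb
    (isColumn_unroll hs) ⟨0, r⟩
  have hend := congrFun (unrollEnd_windingEnd_reflect (N := N) (a := a)
    (i := chosenColumn (unroll N s.2)) (j := (chosenCrossing (unroll N s.2)).1) (w := s.1)) ⟨0, r⟩
  rw [Function.comp_apply] at hend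
  rw [← hend] at hcol
  simp only [unrollEnd, zero_mul, sub_zero] at hcol
  exact hcol

theorem sum_not_crossingFree_eq_zero (hN : 0 < N) (hP : ChainComparable P)
    (hb : StrictAnti (unrollEnd N b)) :
    ∑ s ∈ windingArrays hN.ne' b a with ¬ CrossingFree N s.2,
      (signedWeight s : MvPolynomial P ℤ) = 0 := by
  refine Finset.sum_involution (fun s _ => exchangeChosen N s) (fun s hs => ?_)
    (fun s hs hne hfix => hne ?_) (fun s hs => ?_) (fun s hs => ?_) <;>
    obtain ⟨hmem, hcross⟩ := Finset.mem_filter.mp hs <;>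
    have hcol := mem_windingArrays.mp hmem
  · rw [exchangeChosen, signedWeight_exchangeAt (idx_chosenColumn_ne hN hcol hcross),
      add_neg_cancel]
  · have hneg := signedWeight_exchangeAt (s := s) (N := N)
      (x := (chosenCrossing (unroll N s.2)).2) (idx_chosenColumn_ne hN hcol hcross)
    rw [← exchangeChosen, hfix] at hneg
    exact self_eq_neg.mp hneg
  · exact Finset.mem_filter.mpr ⟨exchangeChosen_mem hN hP hb hmem hcross,
      not_crossingFree_exchangeChosen hN hP hb hcol hcross⟩
  · exact exchangeChosen_exchangeChosen hN hP hb hcol hcross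

end Cancellation

section Main

variable {l : ℕ} [NeZero l] {P : Type*} [Fintype P] [PartialOrder P] {N : ℤ} {a b : Fin l → ℤ}

theorem finsum_det_ePz_eq_sum_crossingFree (hN : 0 < N) (hP : ChainComparable P)
    (ha : StrictAnti (unrollEnd N a)) (hb : StrictAnti (unrollEnd N b)) :
    ∑ᶠ k : {k : Fin l → ℤ // ∑ i, k i = 0},
        Matrix.det (Matrix.of fun i j => ePz P (k.1 i * N + a i - b j)) =
      ∑ F ∈ arrays b a with CrossingFree N F, arrayWeight F := by
  rw [finsum_det_ePz_eq_sum_windingArrays hN.ne',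
    ← Finset.sum_filter_add_sum_filter_not _ fun s => CrossingFree N s.2,
    sum_not_crossingFree_eq_zero hN hP hb, add_zero]
  have htriv : ∀ s : WindingArray l P, s ∈ windingArrays hN.ne' b a → CrossingFree N s.2 →
      s.1 = .trivial := fun s hs h =>
    winding_eq_trivial_of_crossingFree ha hb (mem_windingArrays.mp hs) h
  refine Finset.sum_bij' (fun s _ => s.2) (fun F _ => ⟨.trivial, F⟩)
    (fun s hs => ?_) (fun F hF => ?_) (fun s hs => ?_) (fun _ _ => rfl) (fun s hs => ?_)
  · obtain ⟨hmem, hfree⟩ := Finset.mem_filter.mp hs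
    have := mem_windingArrays.mp hmem
    rw [htriv s hmem hfree, windingEnd_trivial] at this
    exact Finset.mem_filter.mpr ⟨mem_arrays.mpr this, hfree⟩
  · obtain ⟨hmem, hfree⟩ := Finset.mem_filter.mp hF
    refine Finset.mem_filter.mpr ⟨mem_windingArrays.mpr ?_, hfree⟩
    rw [windingEnd_trivial]
    exact mem_arrays.mp hmem
  · obtain ⟨hmem, hfree⟩ := Finset.mem_filter.mp hs
    exact Sigma.ext (htriv s hmem hfree).symm HEq.rfl
  · obtain ⟨hmem, hfree⟩ := Finset.mem_filter.mp hs
    rw [signedWeight, htriv s hmem hfree, Winding.trivial, Equiv.Perm.sign_one, one_smul]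

end Main

section Fillings

variable {l : ℕ} [NeZero l] {P : Type*} [PartialOrder P] {N : ℤ} {b : Fin l → ℤ} {k : Fin l → ℕ}
  {T : ∀ c, Fin (k c) → P} {i j : Column l}

theorem crosses_unroll_toColumn_iff (ha : StrictAnti (unrollEnd N fun c => b c + k c))
    (hij : i < j) :
    (∃ x, Crosses (unroll N fun c => toColumn (b c) (T c)) i j x) ↔
      ∃ (p : Fin (k i.idx)) (q : Fin (k j.idx)),
        b i.idx + (p : ℕ) + (j.turn - i.turn) * N = b j.idx + (q : ℕ) + 1 ∧
          T j.idx q < T i.idx p := by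
  have hend := ha hij
  simp only [unrollEnd] at hend
  constructor
  · rintro ⟨x, -, hbot, hlt⟩
    simp only [unroll] at hbot hlt
    have hjx : b j.idx ≤ x + j.turn * N := not_lt.mp fun h => hbot (toColumn_of_lt h)
    have hxj : x + j.turn * N < b j.idx + k j.idx :=
      not_le.mp fun h => not_top_lt ((toColumn_of_le h).symm.trans_lt hlt)
    have hix : b i.idx ≤ x + 1 + i.turn * N :=
      not_lt.mp fun h => not_lt_bot (hlt.trans_eq (toColumn_of_lt h))
    have hxi : x + 1 + i.turn * N < b i.idx + k i.idx := by linarith [Int.add_one_le_iff.mpr hxj]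
    obtain ⟨q, hq⟩ := exists_eq_add_of_mem_Ico hjx hxj
    obtain ⟨p, hp⟩ := exists_eq_add_of_mem_Ico hix hxi
    rw [hp, hq, toColumn_add, toColumn_add, WithBot.coe_lt_coe, WithTop.coe_lt_coe] at hlt
    exact ⟨p, q, by linarith, hlt⟩
  · rintro ⟨p, q, hpq, hlt⟩
    have hi : b j.idx + (q : ℕ) - j.turn * N + 1 + i.turn * N = b i.idx + (p : ℕ) := by linarith
    refine ⟨b j.idx + (q : ℕ) - j.turn * N, hij, ?_, ?_⟩ <;>
      simp only [unroll, sub_add_cancel, hi, toColumn_add, WithBot.coe_lt_coe, WithTop.coe_lt_coe]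
    · exact WithBot.coe_ne_bot
    · exact hlt

theorem crossingFree_toColumn_iff (hP : ChainComparable P) (hT : ∀ c, StrictMono (T c))
    (ha : StrictAnti (unrollEnd N fun c => b c + k c)) (hb : StrictAnti (unrollEnd N b)) :
    CrossingFree N (fun c => toColumn (b c) (T c)) ↔
      ∀ i j : Column l, i ⋖ j → ∀ (p : Fin (k i.idx)) (q : Fin (k j.idx)),
        b i.idx + (p : ℕ) + (j.turn - i.turn) * N = b j.idx + (q : ℕ) + 1 →
          ¬ T j.idx q < T i.idx p := by
  constructor
  · intro h i j hij p q hpq hlt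
    obtain ⟨x, hx⟩ := (crosses_unroll_toColumn_iff ha hij.lt).mpr ⟨p, q, hpq, hlt⟩
    exact h i j x hx
  · refine fun h => not_crosses_of_covBy hP.withTop.withBot hb
      (isColumn_unroll fun c => isColumn_toColumn (hT c)) fun i j hij x hx => ?_
    obtain ⟨p, q, hpq, hlt⟩ := (crosses_unroll_toColumn_iff ha hij.lt).mp ⟨x, hx⟩
    exact h i j hij p q hpq hlt

end Fillings

section Shapes

variable {f g : ℕ → ℕ}

theorem finite_setOf_lt_part (hf : IsPartition f) (c : ℕ) : {i | c < f i}.Finite := by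
  obtain ⟨M, hM⟩ := hf.2
  exact (Set.finite_lt_nat M).subset fun i hi => not_le.mp fun hMi =>
    (Nat.zero_le c).not_gt (hM i hMi ▸ hi)

theorem conj_antitone (hf : IsPartition f) : Antitone (conj f) := fun c _ h =>
  Set.ncard_le_ncard (fun _ => h.trans_lt) (finite_setOf_lt_part hf c)

theorem conj_le_conj (hg : IsPartition g) (h : ∀ i, f i ≤ g i) (c : ℕ) : conj f c ≤ conj g c :=
  Set.ncard_le_ncard (fun i hi => lt_of_lt_of_le hi (h i)) (finite_setOf_lt_part hg c)

/-- The diagonal coordinate of the first cell below column `c` of the diagram of `f`. -/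
def columnEnd (f : ℕ → ℕ) {l : ℕ} (c : Fin l) : ℤ := conj f c - (c : ℕ)

theorem strictAnti_unrollEnd_columnEnd (hf : IsPartition f) {l d : ℕ} [NeZero l]
    (hd : conj f 0 ≤ conj f (l - 1) + d) :
    StrictAnti (unrollEnd ((l + d : ℕ) : ℤ) (columnEnd f (l := l))) := by
  refine (strictAnti_iff_forall_covBy _).mpr fun i j hij => ?_
  simp only [unrollEnd, columnEnd]
  rcases Column.covBy_iff.mp hij with ⟨ht, hidx⟩ | ⟨ht, hidx, hidx'⟩
  · have := conj_antitone hf (show (i.idx : ℕ) ≤ j.idx by lia)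
    rw [ht]
    lia
  · rw [hidx', ht, show (i.idx : ℕ) = l - 1 by lia, add_mul, one_mul]
    lia

end Shapes

section Tableaux

variable {P : Type*} {lam mu : ℕ → ℕ} {d : ℕ}

theorem columnEnd_add_sub (hlam : IsPartition lam) (hle : ∀ i, mu i ≤ lam i) {l : ℕ} (c : Fin l) :
    columnEnd mu c + ((conj lam c - conj mu c : ℕ) : ℤ) = columnEnd lam c := by
  have := conj_le_conj hlam hle c
  simp only [columnEnd]
  lia

/-- The array on the cylinder given by a filling of the cells of `λ/μ`. -/
def tableauArray (T : ∀ c : Fin (lam 0), Fin (conj lam c - conj mu c) → P) :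
    Fin (lam 0) → ℤ → Entry P := fun c => toColumn (columnEnd mu c) (T c)

variable [PartialOrder P] {T : ∀ c : Fin (lam 0), Fin (conj lam c - conj mu c) → P}

theorem rows_iff_covBy [NeZero (lam 0)] :
    ((∀ (c : Fin (lam 0)) (hc : c.1 + 1 < lam 0) (p : Fin (conj lam c.1 - conj mu c.1))
        (q : Fin (conj lam (c.1 + 1) - conj mu (c.1 + 1))),
        conj mu c.1 + p.1 = conj mu (c.1 + 1) + q.1 → ¬ T ⟨c.1 + 1, hc⟩ q < T c p) ∧
      ∀ (h0 : 0 < lam 0) (p : Fin (conj lam (lam 0 - 1) - conj mu (lam 0 - 1)))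
        (q : Fin (conj lam 0 - conj mu 0)),
        conj mu (lam 0 - 1) + p.1 + d = conj mu 0 + q.1 →
          ¬ T ⟨0, h0⟩ q < T ⟨lam 0 - 1, Nat.sub_lt h0 Nat.one_pos⟩ p) ↔
    ∀ i j : Column (lam 0), i ⋖ j → ∀ (p : Fin (conj lam i.idx - conj mu i.idx))
      (q : Fin (conj lam j.idx - conj mu j.idx)),
      columnEnd mu i.idx + (p : ℕ) + (j.turn - i.turn) * ((lam 0 + d : ℕ) : ℤ) =
        columnEnd mu j.idx + (q : ℕ) + 1 → ¬ T j.idx q < T i.idx p := by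
  constructor
  · rintro ⟨hrow, hwrap⟩ ⟨s, c, hcl⟩ ⟨t, c', hcl'⟩ hij p q hpq
    rw [Column.covBy_iff] at hij
    simp only [columnEnd] at hij hpq p q ⊢
    obtain ⟨rfl, rfl⟩ | ⟨rfl, hc, rfl⟩ := hij
    · rw [sub_self, zero_mul] at hpq
      exact hrow ⟨c, hcl⟩ hcl' p q (by dsimp only; omega)
    · obtain rfl : c = lam 0 - 1 := Nat.eq_sub_of_add_eq hc
      rw [add_sub_cancel_left, one_mul] at hpq
      exact hwrap hcl' p q (by omega)
  · refine fun h => ⟨fun c hc p q hpq => ?_, fun h0 p q hpq => ?_⟩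
    · refine h ⟨0, c⟩ ⟨0, ⟨c + 1, hc⟩⟩ (Column.covBy_iff.mpr (.inl ⟨rfl, rfl⟩)) p q ?_
      simp only [columnEnd]
      lia
    · refine h ⟨0, ⟨lam 0 - 1, Nat.sub_lt h0 Nat.one_pos⟩⟩ ⟨1, ⟨0, h0⟩⟩
        (Column.covBy_iff.mpr (.inr ⟨rfl, Nat.sub_add_cancel h0, rfl⟩)) p q ?_
      simp only [columnEnd]
      lia

theorem isCylTab_iff (hP : ChainComparable P) (hlam : IsPartition lam) (hmu : IsPartition mu)
    (hle : ∀ i, mu i ≤ lam i) [NeZero (lam 0)]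
    (hlamd : conj lam 0 ≤ conj lam (lam 0 - 1) + d)
    (hmud : conj mu 0 ≤ conj mu (lam 0 - 1) + d) :
    IsCylTab lam mu d T ↔
      (∀ c, StrictMono (T c)) ∧ CrossingFree ((lam 0 + d : ℕ) : ℤ) (tableauArray T) := by
  have ha : StrictAnti (unrollEnd ((lam 0 + d : ℕ) : ℤ) fun c : Fin (lam 0) =>
      columnEnd mu c + ((conj lam c - conj mu c : ℕ) : ℤ)) := by
    simp only [columnEnd_add_sub hlam hle]
    exact strictAnti_unrollEnd_columnEnd hlam hlamd
  have hb := strictAnti_unrollEnd_columnEnd hmu hmud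
  constructor
  · rintro ⟨-, -, -, hcol, hrows⟩
    have hT : ∀ c, StrictMono (T c) := fun c p q => hcol c p q
    exact ⟨hT, (crossingFree_toColumn_iff hP hT ha hb).mpr (rows_iff_covBy.mp hrows)⟩
  · rintro ⟨hT, hfree⟩
    exact ⟨fun c _ => ⟨conj_antitone hlam c.le_succ, conj_antitone hmu c.le_succ⟩,
      fun c _ => conj_le_conj hlam hle c, fun _ => ⟨hlamd, hmud⟩, fun c p q hpq => hT c hpq,
      rows_iff_covBy.mpr ((crossingFree_toColumn_iff hP hT ha hb).mp hfree)⟩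

theorem isColumn_tableauArray (hlam : IsPartition lam) (hle : ∀ i, mu i ≤ lam i)
    (hT : ∀ c, StrictMono (T c)) (c : Fin (lam 0)) :
    IsColumn (columnEnd mu c) (columnEnd lam c) (tableauArray T c) :=
  columnEnd_add_sub hlam hle c ▸ isColumn_toColumn (hT c)

theorem exists_tableauArray_eq (hlam : IsPartition lam) (hle : ∀ i, mu i ≤ lam i)
    {F : Fin (lam 0) → ℤ → Entry P}
    (hF : ∀ c, IsColumn (columnEnd mu c) (columnEnd lam c) (F c)) :
    ∃ T : ∀ c : Fin (lam 0), Fin (conj lam c - conj mu c) → P,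
      (∀ c, StrictMono (T c)) ∧ tableauArray T = F := by
  simp only [← columnEnd_add_sub hlam hle] at hF
  choose T hT hTF using fun c => (hF c).exists_toColumn_eq
  exact ⟨T, hT, funext hTF⟩

theorem arrayWeight_tableauArray (hT : ∀ c, StrictMono (T c)) :
    arrayWeight (tableauArray T) = uT lam mu T :=
  (arrayWeight_eq_prod fun c => isColumn_toColumn (hT c)).trans
    (Finset.prod_congr rfl fun _ _ => columnWeight_toColumn)

theorem sum_uT_eq_sum_crossingFree [Fintype P] (hP : ChainComparable P) (hlam : IsPartition lam)
    (hmu : IsPartition mu) (hle : ∀ i, mu i ≤ lam i) [NeZero (lam 0)]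
    (hlamd : conj lam 0 ≤ conj lam (lam 0 - 1) + d)
    (hmud : conj mu 0 ≤ conj mu (lam 0 - 1) + d) :
    ∑ T : {T : ∀ c : Fin (lam 0), Fin (conj lam c - conj mu c) → P // IsCylTab lam mu d T},
        uT lam mu T.1 =
      ∑ F ∈ (arrays (columnEnd mu) (columnEnd lam) : Finset (Fin (lam 0) → ℤ → Entry P)) with
        CrossingFree ((lam 0 + d : ℕ) : ℤ) F, arrayWeight F := by
  have htab (T : ∀ c : Fin (lam 0), Fin (conj lam c - conj mu c) → P) :=
    isCylTab_iff (T := T) hP hlam hmu hle hlamd hmud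
  refine Finset.sum_bij (fun T _ => tableauArray T.1) (fun T _ => ?_) (fun T _ T' _ heq => ?_)
    (fun F hF => ?_) fun T _ => (arrayWeight_tableauArray ((htab _).mp T.2).1).symm
  · obtain ⟨hT, hfree⟩ := (htab _).mp T.2
    exact Finset.mem_filter.mpr ⟨mem_arrays.mpr (isColumn_tableauArray hlam hle hT), hfree⟩
  · exact Subtype.ext (funext fun c => toColumn_injective (congrFun heq c))
  · obtain ⟨hF, hfree⟩ := Finset.mem_filter.mp hF
    obtain ⟨T, hT, rfl⟩ := exists_tableauArray_eq hlam hle (mem_arrays.mp hF)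
    exact ⟨⟨T, (htab T).mpr ⟨hT, hfree⟩⟩, Finset.mem_univ _, rfl⟩

end Tableaux

section Schur

variable {P : Type*} {lam mu : ℕ → ℕ}

/-- The `P`-cylindric Schur function `s^P_{λ/μ/d}(u)`. -/
def cylindricSchur (P : Type*) [Fintype P] [PartialOrder P] (lam mu : ℕ → ℕ) (d : ℕ) :
    MvPolynomial P ℤ :=
  ∑ᶠ k : {k : Fin (lam 0) → ℤ // ∑ i, k i = 0},
    Matrix.det (Matrix.of fun i j : Fin (lam 0) =>
      ePz P (k.1 i * ((lam 0 + d : ℕ) : ℤ)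
        + (conj lam i.1 : ℤ) - (conj mu j.1 : ℤ) - (i.1 : ℤ) + (j.1 : ℤ)))

theorem coeff_uT_nonneg (T : ∀ c : Fin (lam 0), Fin (conj lam c - conj mu c) → P) (m : P →₀ ℕ) :
    0 ≤ coeff m (uT lam mu T) := by
  have hmap : uT lam mu T = map (Nat.castRingHom ℤ) (∏ c, ∏ p, X (T c p)) := by
    simp only [uT, map_prod, map_X]
  rw [hmap, coeff_map]
  exact Int.natCast_nonneg _

variable [Fintype P] [PartialOrder P] {d : ℕ}

theorem cylindricSchur_eq_sum_uT (hP : ChainComparable P) (hlam : IsPartition lam)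
    (hmu : IsPartition mu) (hle : ∀ i, mu i ≤ lam i) (hpos : 0 < lam 0)
    (hlamd : conj lam 0 ≤ conj lam (lam 0 - 1) + d)
    (hmud : conj mu 0 ≤ conj mu (lam 0 - 1) + d) :
    cylindricSchur P lam mu d =
      ∑ T : {T : ∀ c : Fin (lam 0), Fin (conj lam c - conj mu c) → P // IsCylTab lam mu d T},
        uT lam mu T.1 := by
  have : NeZero (lam 0) := ⟨hpos.ne'⟩
  rw [sum_uT_eq_sum_crossingFree hP hlam hmu hle hlamd hmud,
    ← finsum_det_ePz_eq_sum_crossingFree (by lia) hP (strictAnti_unrollEnd_columnEnd hlam hlamd)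
      (strictAnti_unrollEnd_columnEnd hmu hmud), cylindricSchur]
  refine finsum_congr fun k => congrArg _ (congrArg _ (funext₂ fun i j => congrArg _ ?_))
  simp only [columnEnd]
  ring

end Schur

end

end CylindricSchur

theorem stmt_7_general (P : Type*) [Fintype P] [PartialOrder P] (h31 : ThreePlusOneFree P)
    (lam mu : ℕ → ℕ) (d : ℕ) (hlam : IsPartition lam) (hmu : IsPartition mu)
    (hle : ∀ i, mu i ≤ lam i) (hpos : 0 < lam 0) (hlamd : conj lam 0 ≤ conj lam (lam 0 - 1) + d)
    (hmud : conj mu 0 ≤ conj mu (lam 0 - 1) + d) :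
    CylindricSchur.cylindricSchur P lam mu d =
        ∑ T : {T : ∀ c : Fin (lam 0), Fin (conj lam c - conj mu c) → P // IsCylTab lam mu d T},
          uT lam mu T.1 ∧
      ∀ m : P →₀ ℕ, 0 ≤ coeff m (CylindricSchur.cylindricSchur P lam mu d) := by
  have hsum := CylindricSchur.cylindricSchur_eq_sum_uT
    (CylindricSchur.chainComparable_of_threePlusOneFree h31) hlam hmu hle hpos hlamd hmud
  refine ⟨hsum, fun m => ?_⟩
  rw [hsum, coeff_sum]
  exact Finset.sum_nonneg fun T _ => CylindricSchur.coeff_uT_nonneg T.1 m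

/-- (main theorem) for a `(3+1)`-free finite poset `P` and a cylindric
shape `λ/μ/d`, the `P`-cylindric Schur function
`s^P_{λ/μ/d}(u) = Σ_{k, Σk=0} det[e^P_{k_i(λ₁+d)+λ'_i-μ'_j-i+j}(u)]`
equals the weight generating function of cylindric `P`-tableaux of shape `λ/μ/d`;
in particular all its coefficients are nonnegative. -/
theorem stmt_7 (P : Type*) [Fintype P] [PartialOrder P] (h31 : ThreePlusOneFree P)
    (lam mu : ℕ → ℕ) (d : ℕ) (hshape : IsCylShape lam mu d) :
    ((∑ᶠ k : {k : Fin (lam 0) → ℤ // ∑ i, k i = 0},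
        Matrix.det (Matrix.of fun i j : Fin (lam 0) =>
          ePz P (k.1 i * ((lam 0 + d : ℕ) : ℤ)
            + (conj lam i.1 : ℤ) - (conj mu j.1 : ℤ) - (i.1 : ℤ) + (j.1 : ℤ))))
      = ∑ T : {T : ∀ c : Fin (lam 0), Fin (conj lam c - conj mu c) → P //
            IsCylTab lam mu d T},
          uT lam mu T.1)
    ∧ ∀ mo : P →₀ ℕ,
        0 ≤ MvPolynomial.coeff mo
          (∑ᶠ k : {k : Fin (lam 0) → ℤ // ∑ i, k i = 0},
            Matrix.det (Matrix.of fun i j : Fin (lam 0) =>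
              ePz P (k.1 i * ((lam 0 + d : ℕ) : ℤ)
                + (conj lam i.1 : ℤ) - (conj mu j.1 : ℤ) - (i.1 : ℤ) + (j.1 : ℤ)))) := by
  obtain ⟨hlam, hmu, hle, hpos, hlamd, hmud, -⟩ := hshape
  exact stmt_7_general P h31 lam mu d hlam hmu hle hpos hlamd hmud
end
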